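/- Let q be a prime power with q > 2 and let S be an algebraic hypersurface of PG(6,q^2) of degree q+1 defined over GF(q^2), not containing any solid, with exactly q^11 + q^9 + q^7 + q^4 + q^2 + 1 rational points, and let Sigma_3 be a solid with |S ∩ Sigma_3| = q^4 + q^2 + 1. If Sigma_4 is a 4-dimensional projective subspace of PG(6,q^2) containing Sigma_3 and C := S ∩ Sigma_4, then every line of Sigma_4 meets C in exactly 1, q+1, or q^2+1 rational points. -/

import Mathlib

open MvPolynomial Module

/-- The set of points of the projective subspace of `PG(n-1, F)` determined by
the linear subspace `W` of `F^n`. -/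
def projPts {F : Type} [Field F] {n : ℕ} (W : Submodule F (Fin n → F)) :
    Set (Projectivization F (Fin n → F)) :=
  {P | P.submodule ≤ W}

/-- The set of `F`-rational points of the hypersurface of `PG(n-1, F)` defined by the
homogeneous polynomial `f`. -/
def hypersurfacePts {F : Type} [Field F] {n : ℕ} (f : MvPolynomial (Fin n) F) :
    Set (Projectivization F (Fin n → F)) :=
  {P | MvPolynomial.eval P.rep f = 0}

/-!
Pass from points to vectors over the field `K` of order `q ^ 2`. Removing the vectors of `Σ₃`,
the cardinalities say that exactly one in `q` of the remaining vectors is a zero of the form `f`.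

If some line of `Σ₃` missed `S`, then so would the line at infinity of every affine plane parallel
to it. Such a plane section is a curve of degree `q + 1` with fewer than `q ^ 3` affine points: when
it is reducible because each component satisfies the trivial bound, when it is irreducible by the
Stöhr–Voloch argument, which intersects the curve with the polar of its Frobenius image. The average
over all the parallel planes would then be too small. So every line of `Σ₃` meets `S`, and by
counting `S ∩ Σ₃` is a plane `π`.

Restricted to an affine translate of `π` outside `Σ₃`, the polynomial `f` loses its leading form,
hence has degree at most `q`; it does not vanish identically, since otherwise the hypersurface would
contain a solid. Averaging again, every restriction attains the Schwartz–Zippel bound. The zeros of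
such an extremal polynomial meet each affine line in `q` points unless the line has direction in the
zero set of the leading form, and are invariant under translation in these directions.

A line of `Σ₄` meets `Σ₃`. Its intersection with `S` is immediate from this when the meeting point
lies in `π`. Otherwise join the line to a point of `π` that is a zero of none of the leading forms
along it: in the resulting plane the first two moments of the line intersection numbers `x` give
`∑ (x - 1) * (q + 1 - x) = 0`.
-/

open scoped Finset

section AffinePlane

variable {K : Type*} [Field K] [Fintype K] (B : K → K → Prop) [DecidableRel B]

/-- The number of points of the affine plane set `B` on the line `t = m * s + c`. -/
def lineCount (m c : K) : ℕ := #{s | B s (m * s + c)}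

theorem sum_lineCount_mul (g : K → K → ℕ) :
    ∑ m, ∑ c, lineCount B m c * g m c =
      ∑ s, ∑ t, if B s t then ∑ m, g m (t - m * s) else 0 := by
  have reindex (m s : K) : ∑ c, (if B s (m * s + c) then g m c else 0) =
      ∑ t, if B s t then g m (t - m * s) else 0 :=
    Fintype.sum_equiv (Equiv.addLeft (m * s)) _ _ fun c ↦ by simp
  calc ∑ m, ∑ c, lineCount B m c * g m c
      = ∑ m, ∑ s, ∑ c, if B s (m * s + c) then g m c else 0 := by
        refine Finset.sum_congr rfl fun m _ ↦ ?_
        rw [Finset.sum_comm]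
        simp only [lineCount, Finset.card_filter, Finset.sum_mul, ite_mul, one_mul, zero_mul]
    _ = ∑ s, ∑ t, ∑ m, if B s t then g m (t - m * s) else 0 := by
        simp only [reindex]
        rw [Finset.sum_comm]
        exact Finset.sum_congr rfl fun s _ ↦ Finset.sum_comm
    _ = ∑ s, ∑ t, if B s t then ∑ m, g m (t - m * s) else 0 := by
        refine Finset.sum_congr rfl fun s _ ↦ Finset.sum_congr rfl fun t _ ↦ ?_
        split_ifs <;> simp

theorem sum_lineCount : ∑ m, ∑ c, lineCount B m c = Fintype.card K * ∑ s, #{t | B s t} := by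
  have := sum_lineCount_mul B fun _ _ ↦ 1
  simp only [mul_one, Finset.sum_const, Finset.card_univ, smul_eq_mul] at this
  simp only [this, Finset.card_filter, Finset.mul_sum, mul_ite, mul_one, mul_zero]

variable {B} in
theorem sum_lineCount_through {a b : K} (hab : B a b) :
    ∑ m, lineCount B m (b - m * a) + #{t | B a t} = ∑ s, #{t | B s t} + Fintype.card K := by
  classical
  have at_base : #{m : K | B a (m * a + (b - m * a))} = Fintype.card K := by simp [hab]
  have off_base (s : K) (hs : s ≠ a) : #{m : K | B s (m * s + (b - m * a))} = #{t | B s t} := by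
    refine Finset.card_equiv ((Equiv.mulRight₀ (s - a) (sub_ne_zero.2 hs)).trans
      (Equiv.addRight b)) fun m ↦ ?_
    simp [show m * s + (b - m * a) = m * (s - a) + b by ring]
  have swap : ∑ m, lineCount B m (b - m * a) = ∑ s, #{m : K | B s (m * s + (b - m * a))} := by
    simp only [lineCount, Finset.card_filter]
    exact Finset.sum_comm
  rw [swap, ← Finset.add_sum_erase _ _ (Finset.mem_univ a), at_base,
    Finset.sum_congr rfl fun s hs ↦ off_base s (Finset.ne_of_mem_erase hs),
    ← Finset.add_sum_erase _ (fun s ↦ #{t | B s t}) (Finset.mem_univ a)]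
  ring

variable {B}

theorem sum_card_column_add_card_le {d : ℕ} (hd : 1 ≤ d) (hcol : ∀ s, #{t | B s t} ≤ d)
    (hline : ∀ m c, lineCount B m c ≤ d) :
    ∑ s, #{t | B s t} + Fintype.card K ≤ d * (Fintype.card K + 1) := by
  by_cases hB : ∃ a b, B a b
  · obtain ⟨a, b, hab⟩ := hB
    have hsum : ∑ m, lineCount B m (b - m * a) ≤ Fintype.card K * d := by
      simpa using Finset.sum_le_card_nsmul Finset.univ _ d fun m _ ↦ hline m (b - m * a)
    have := sum_lineCount_through hab
    have := hcol a
    nlinarith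
  · push Not at hB
    simp only [hB, Finset.filter_false, Finset.card_empty, Finset.sum_const_zero]
    nlinarith

theorem sum_sq_lineCount {d : ℕ} (hcol : ∀ s, #{t | B s t} = d) :
    ∑ m, ∑ c, lineCount B m c ^ 2 + Fintype.card K * d * d =
      Fintype.card K * d * (Fintype.card K * d + Fintype.card K) := by
  have through (s t : K) : (if B s t then ∑ m, lineCount B m (t - m * s) else 0) +
      (if B s t then d else 0) = if B s t then Fintype.card K * d + Fintype.card K else 0 := by
    split_ifs with hst
    · simpa [hcol] using sum_lineCount_through hst
    · rfl
  have points (N : ℕ) : ∑ s, ∑ t, (if B s t then N else 0) = Fintype.card K * d * N := by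
    simp [← Finset.sum_filter, hcol, mul_assoc]
  simp only [pow_two, sum_lineCount_mul B (lineCount B)]
  rw [← points d, ← points, ← Finset.sum_add_distrib]
  exact Finset.sum_congr rfl fun s _ ↦ by
    rw [← Finset.sum_add_distrib]; exact Finset.sum_congr rfl fun t _ ↦ through s t

-- The first two moments of `lineCount` give `∑ (lineCount - 1) * (q + 1 - lineCount) = 0`.
theorem lineCount_eq_one_or_eq_add_one {q : ℕ} (hK : Fintype.card K = q ^ 2)
    (hcol : ∀ s, #{t | B s t} = q) (hpos : ∀ m c, 1 ≤ lineCount B m c)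
    (hle : ∀ m c, lineCount B m c ≤ q + 1) (m c : K) :
    lineCount B m c = 1 ∨ lineCount B m c = q + 1 := by
  let defect (l : K × K) : ℤ := (lineCount B l.1 l.2 - 1) * (q + 1 - lineCount B l.1 l.2)
  have defect_nonneg (l : K × K) : 0 ≤ defect l :=
    mul_nonneg (by have := hpos l.1 l.2; omega) (by have := hle l.1 l.2; omega)
  have first : ∑ m, ∑ c, (lineCount B m c : ℤ) = q ^ 2 * (q ^ 2 * q) := by
    exact_mod_cast by simpa [hcol, hK] using sum_lineCount B
  have second : ∑ m, ∑ c, (lineCount B m c : ℤ) ^ 2 + q ^ 2 * q * q =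
      q ^ 2 * q * (q ^ 2 * q + q ^ 2) := by
    exact_mod_cast by simpa [hK] using sum_sq_lineCount hcol
  have defect_sum : ∑ l, defect l = 0 := by
    have expand (l : K × K) : defect l =
        (q + 2) * lineCount B l.1 l.2 - lineCount B l.1 l.2 ^ 2 - (q + 1) := by
      simp only [defect]; ring
    simp only [expand, Finset.sum_sub_distrib, ← Finset.mul_sum, Fintype.sum_prod_type,
      Finset.sum_const, Finset.card_univ, Fintype.card_prod, nsmul_eq_mul, hK, first]
    push_cast
    linear_combination -second
  have := (Finset.sum_eq_zero_iff_of_nonneg fun l _ ↦ defect_nonneg l).1 defect_sum (m, c)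
    (Finset.mem_univ _)
  rcases mul_eq_zero.1 this with h | h <;> simp only at h <;> omega

variable (B) in
/-- The lines `t = m * s + c`, recorded as pairs `(m, c)`, all of whose points lie in `B`. -/
def fullLines : Finset (K × K) := {l | ∀ s, B s (l.1 * s + l.2)}

theorem mem_fullLines {m c : K} : (m, c) ∈ fullLines B ↔ ∀ s, B s (m * s + c) := by
  simp [fullLines]

theorem exists_fullLine_through {d : ℕ} (hd : d < Fintype.card K) (hcol : ∀ s, #{t | B s t} = d)
    (hline : ∀ m c, (m, c) ∈ fullLines B ∨ lineCount B m c ≤ d) {a b : K} (hab : B a b) :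
    ∃ m, (m, b - m * a) ∈ fullLines B := by
  by_contra! hnone
  have hsum : ∑ m, lineCount B m (b - m * a) ≤ Fintype.card K * d := by
    simpa using Finset.sum_le_card_nsmul Finset.univ _ d fun m _ ↦
      (hline m (b - m * a)).resolve_left (hnone m)
  have := sum_lineCount_through hab
  simp only [hcol, Finset.sum_const, Finset.card_univ, smul_eq_mul] at this
  omega

-- Among `d + 1` full lines, two would meet on each of the columns.
theorem card_fullLines_le {d : ℕ} (hd : d * (d + 1) < 2 * Fintype.card K)
    (hcol : ∀ s, #{t | B s t} ≤ d) : #(fullLines B) ≤ d := by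
  classical
  by_contra! hlt
  obtain ⟨T, hT, hcard⟩ := Finset.exists_subset_card_eq (Nat.succ_le_of_lt hlt)
  let meet (s : K) (p : (K × K) × (K × K)) : Prop := p.1.1 * s + p.1.2 = p.2.1 * s + p.2.2
  have two_le (s : K) : 2 ≤ #(T.offDiag.bipartiteAbove meet s) := by
    obtain ⟨l, hl, l', hl', hne, heq⟩ := Finset.exists_ne_map_eq_of_card_lt_of_maps_to
      (s := T) (t := {t | B s t}) (f := fun l ↦ l.1 * s + l.2)
      (by have := hcol s; omega)
      (fun l hl ↦ by simpa using mem_fullLines.1 (hT hl) s)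
    refine Finset.one_lt_card.2 ⟨(l, l'), ?_, (l', l), ?_, by simp [hne]⟩ <;>
      simp [Finset.mem_bipartiteAbove, meet, hl, hl', hne, hne.symm, heq]
  have le_one (p) (hp : p ∈ T.offDiag) : #(Finset.univ.bipartiteBelow meet p) ≤ 1 := by
    refine Finset.card_le_one.2 fun s hs s' hs' ↦ ?_
    simp only [Finset.mem_bipartiteBelow, Finset.mem_univ, true_and, meet] at hs hs'
    by_contra hss
    have hslope : p.1.1 = p.2.1 := by
      refine mul_right_cancel₀ (sub_ne_zero.2 hss) ?_
      linear_combination hs - hs'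
    refine (Finset.mem_offDiag.1 hp).2.2 (Prod.ext hslope ?_)
    linear_combination hs - s * hslope
  have := Finset.card_mul_le_card_mul meet (fun s _ ↦ two_le s) le_one
  rw [Finset.offDiag_card, Finset.card_univ, hcard, ← Nat.mul_sub_one] at this
  simp only [Nat.succ_eq_add_one, Nat.add_sub_cancel] at this
  linarith

theorem exists_slope_of_lineCount_le {d : ℕ} (hd₀ : 0 < d) (hd : d * (d + 1) < 2 * Fintype.card K)
    (hcol : ∀ s, #{t | B s t} = d)
    (hline : ∀ m c, (m, c) ∈ fullLines B ∨ lineCount B m c ≤ d) :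
    ∃ m₀, ∀ s t, B s t ↔ B 0 (t - m₀ * s) := by
  have hdK : d < Fintype.card K := by nlinarith
  have through {a b : K} (hab : B a b) := exists_fullLine_through hdK hcol hline hab
  have injOn (s : K) : Set.InjOn (fun l : K × K ↦ l.1 * s + l.2) (fullLines B) := by
    refine Finset.injOn_of_surjOn_of_card_le _ (t := {t | B s t})
      (fun l hl ↦ by simpa using mem_fullLines.1 hl s) (fun t ht ↦ ?_)
      ((card_fullLines_le hd fun s ↦ (hcol s).le).trans (hcol s).ge)
    obtain ⟨m, hm⟩ := through (by simpa using ht)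
    exact ⟨_, hm, by ring⟩
  have parallel {m c m' c' : K} (h : (m, c) ∈ fullLines B) (h' : (m', c') ∈ fullLines B) :
      m = m' := by
    by_contra hne
    have hsub := sub_ne_zero.2 hne
    have hmeet : m * ((c' - c) / (m - m')) + c = m' * ((c' - c) / (m - m')) + c' := by
      field_simp
      ring
    exact hne (congrArg Prod.fst (injOn _ h h' hmeet))
  obtain ⟨b, hb⟩ : ∃ b, B 0 b := by
    obtain ⟨b, hb⟩ := Finset.card_pos.1 (hd₀.trans_eq (hcol 0).symm)
    exact ⟨b, by simpa using hb⟩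
  obtain ⟨m₀, hm₀⟩ := through hb
  refine ⟨m₀, fun s t ↦ ⟨fun hst ↦ ?_, fun h0 ↦ ?_⟩⟩
  · obtain ⟨m, hm⟩ := through hst
    obtain rfl := parallel hm₀ hm
    simpa using mem_fullLines.1 hm 0
  · obtain ⟨m, hm⟩ := through h0
    obtain rfl := parallel hm₀ hm
    simpa using mem_fullLines.1 hm s

end AffinePlane

section Translates

variable {V T : Type*} [AddGroup V] [Fintype T] {O : Finset V} {g : T → V}
  (hO : ∀ t w, w + g t ∈ O ↔ w ∈ O) (p : V → Prop) [DecidablePred p]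
include hO

theorem sum_card_translates : ∑ w ∈ O, #{t | p (w + g t)} = Fintype.card T * #{w ∈ O | p w} := by
  have shift (t : T) : ∑ w ∈ O, (if p (w + g t) then 1 else 0) = #{w ∈ O | p w} := by
    rw [Finset.card_filter]
    exact Finset.sum_equiv (Equiv.addRight (g t)) (fun w ↦ (hO t w).symm) fun w _ ↦ rfl
  simp only [Finset.card_filter _ Finset.univ]
  rw [Finset.sum_comm]
  simp [shift]

theorem card_translates_eq_of_le {N : ℕ} (hle : ∀ w ∈ O, #{t | p (w + g t)} ≤ N)
    (havg : Fintype.card T * #{w ∈ O | p w} = #O * N) {w : V} (hw : w ∈ O) :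
    #{t | p (w + g t)} = N := by
  refine (Finset.sum_eq_sum_iff_of_le hle).1 ?_ w hw
  rw [sum_card_translates hO, havg, Finset.sum_const, smul_eq_mul]

end Translates

section Restriction

variable {K σ ι : Type*} [Field K]

theorem coeff_prod_sum_of_natDegree_le {s : Finset ι} {p : ι → Polynomial K}
    {e : ι → ℕ} (h : ∀ i ∈ s, (p i).natDegree ≤ e i) :
    (∏ i ∈ s, p i).coeff (∑ i ∈ s, e i) = ∏ i ∈ s, (p i).coeff (e i) := by
  classical
  induction s using Finset.induction_on with
  | empty => simp
  | insert i s hi ih =>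
    have hs : ∀ j ∈ s, (p j).natDegree ≤ e j := fun j hj ↦ h j (Finset.mem_insert_of_mem hj)
    rw [Finset.prod_insert hi, Finset.sum_insert hi, Finset.prod_insert hi,
      Polynomial.coeff_mul_add_eq_of_natDegree_le (h i (Finset.mem_insert_self i s))
        ((Polynomial.natDegree_prod_le _ _).trans (Finset.sum_le_sum hs)), ih hs]

/-- Restriction of a polynomial to the line `z + X • P`, as a polynomial in the parameter `X`. -/
noncomputable def restrictLine (z P : σ → K) : MvPolynomial σ K →ₐ[K] Polynomial K :=
  aeval fun i ↦ Polynomial.C (z i) + Polynomial.C (P i) * Polynomial.X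

variable {z P : σ → K} {G : MvPolynomial σ K} {d : ℕ}

@[simp]
theorem eval_restrictLine (z P : σ → K) (G : MvPolynomial σ K) (l : K) :
    (restrictLine z P G).eval l = eval (z + l • P) G := by
  have hhom : ((Polynomial.aeval l).comp (restrictLine z P)) = aeval (z + l • P) := by
    ext i
    simp [restrictLine, mul_comm l]
  simpa [aeval_eq_eval] using DFunLike.congr_fun hhom G

theorem natDegree_restrictLine_le (hd : G.totalDegree ≤ d) :
    (restrictLine z P G).natDegree ≤ d := by
  have := aeval_natDegree_le (n := 1) G hd
    (fun i ↦ Polynomial.C (z i) + Polynomial.C (P i) * Polynomial.X) fun i ↦ by compute_degree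
  simpa [restrictLine] using this

theorem coeff_restrictLine_monomial (s : σ →₀ ℕ) (a : K) :
    (restrictLine z P (monomial s a)).coeff s.degree = eval P (monomial s a) := by
  have linear (i : σ) :
      (Polynomial.C (z i) + Polynomial.C (P i) * Polynomial.X).natDegree ≤ 1 := by
    compute_degree
  rw [restrictLine, aeval_monomial, eval_monomial, Polynomial.algebraMap_eq,
    Polynomial.coeff_C_mul, Finsupp.prod, Finsupp.degree_apply,
    coeff_prod_sum_of_natDegree_le fun i _ ↦ by
      simpa using Polynomial.natDegree_pow_le_of_le (s i) (linear i)]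
  congr 1
  refine Finset.prod_congr rfl fun i _ ↦ ?_
  have := Polynomial.coeff_pow_of_natDegree_le (m := s i) (linear i)
  rw [mul_one] at this
  simp [this]

theorem coeff_restrictLine (hd : G.totalDegree ≤ d) :
    (restrictLine z P G).coeff d = eval P (homogeneousComponent d G) := by
  conv_lhs => rw [← support_sum_monomial_coeff G, map_sum]
  rw [Polynomial.finsetSum_coeff, homogeneousComponent_apply, map_sum, Finset.sum_filter]
  refine Finset.sum_congr rfl fun s hs ↦ ?_
  split_ifs with h
  · rw [← h, coeff_restrictLine_monomial]
  · have hlt : s.degree < d := lt_of_le_of_ne ((le_totalDegree hs).trans hd) h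
    exact Polynomial.coeff_eq_zero_of_natDegree_lt
      ((natDegree_restrictLine_le (totalDegree_monomial_le _ _)).trans_lt hlt)

theorem restrictLine_ne_zero_of_leading (hd : G.totalDegree ≤ d)
    (hP : eval P (homogeneousComponent d G) ≠ 0) : restrictLine z P G ≠ 0 := by
  intro h
  simp [← coeff_restrictLine (z := z) hd, h] at hP

section Finite

variable [Fintype K] [DecidableEq K]

theorem card_zeros_line_le_natDegree (h : restrictLine z P G ≠ 0) :
    #{l : K | eval (z + l • P) G = 0} ≤ (restrictLine z P G).natDegree :=
  Polynomial.card_le_degree_of_subset_roots fun l hl ↦ by simpa [h] using hl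

theorem card_zeros_line_le (hd : G.totalDegree ≤ d) (h : restrictLine z P G ≠ 0) :
    #{l : K | eval (z + l • P) G = 0} ≤ d :=
  (card_zeros_line_le_natDegree h).trans (natDegree_restrictLine_le hd)

theorem line_subset_zeros_or_card_le (hd : G.totalDegree ≤ d) :
    (∀ l : K, eval (z + l • P) G = 0) ∨ #{l : K | eval (z + l • P) G = 0} ≤ d := by
  by_cases h : restrictLine z P G = 0
  · left
    simp [← eval_restrictLine, h]
  · exact .inr (card_zeros_line_le hd h)

theorem line_subset_zeros_or_card_lt (hd : G.totalDegree ≤ d)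
    (hP : eval P (homogeneousComponent d G) = 0) :
    (∀ l : K, eval (z + l • P) G = 0) ∨ #{l : K | eval (z + l • P) G = 0} < d := by
  by_cases h : restrictLine z P G = 0
  · left
    simp [← eval_restrictLine, h]
  · right
    refine (card_zeros_line_le_natDegree h).trans_lt ?_
    refine lt_of_le_of_ne (natDegree_restrictLine_le hd) fun heq ↦ h ?_
    rwa [← coeff_restrictLine (z := z) hd, ← heq, Polynomial.coeff_natDegree,
      Polynomial.leadingCoeff_eq_zero] at hP

omit [DecidableEq K] in
theorem totalDegree_le_of_leading_eq_zero (hd : G.totalDegree ≤ d + 1)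
    (hK : d + 1 ≤ Fintype.card K) (h : ∀ P, eval P (homogeneousComponent (d + 1) G) = 0) :
    G.totalDegree ≤ d := by
  have hlead : homogeneousComponent (d + 1) G = 0 :=
    (homogeneousComponent_isHomogeneous _ _).eq_zero_of_forall_eval_eq_zero_of_le_card h
      (by simpa using hK)
  refine Finset.sup_le fun s hs ↦ ?_
  have hle : s.degree ≤ d + 1 := (le_totalDegree hs).trans hd
  refine Nat.le_of_lt_succ (lt_of_le_of_ne hle fun hdeg ↦ mem_support_iff.1 hs ?_)
  have := coeff_homogeneousComponent (d + 1) G s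
  change s.degree = d + 1 at hdeg
  rwa [hlead, if_pos hdeg, coeff_zero, eq_comm] at this

theorem card_zeros_le_of_totalDegree_le {n : ℕ} {G : MvPolynomial (Fin (n + 1)) K} (hG : G ≠ 0)
    (hd : G.totalDegree ≤ d) : #{y | eval y G = 0} ≤ d * Fintype.card K ^ n := by
  have hsz := schwartz_zippel_totalDegree hG (Finset.univ : Finset K)
  simp only [Fintype.piFinset_univ, Finset.card_univ] at hsz
  have hpos : (0 : ℚ≥0) < Fintype.card K := by exact_mod_cast Fintype.card_pos
  rw [div_le_div_iff₀ (by positivity) hpos, pow_succ, ← mul_assoc] at hsz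
  refine (le_of_mul_le_mul_right (a := Fintype.card K) ?_ Fintype.card_pos).trans
    (Nat.mul_le_mul_right _ hd)
  exact_mod_cast hsz

end Finite

variable [Fintype ι] [DecidableEq ι]

theorem dual_apply_eq_sum (f : Dual K (ι → K)) (y : ι → K) :
    f y = ∑ i, f (Pi.single i 1) * y i := by
  conv_lhs => rw [pi_eq_sum_univ' y]
  simp [map_sum, mul_comm]

/-- The linear form with the same values as the functional `f`. -/
noncomputable def linearForm (f : Dual K (ι → K)) : MvPolynomial ι K :=
  ∑ i, C (f (Pi.single i 1)) * X i

theorem isHomogeneous_linearForm (f : Dual K (ι → K)) : (linearForm f).IsHomogeneous 1 :=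
  IsHomogeneous.sum _ _ _ fun _ _ ↦ isHomogeneous_C_mul_X _ _

theorem eval_linearForm (f : Dual K (ι → K)) (y : ι → K) : eval y (linearForm f) = f y := by
  simp [linearForm, dual_apply_eq_sum f y]

theorem restrictLine_linearForm (z P : ι → K) (f : Dual K (ι → K)) :
    restrictLine z P (linearForm f) = .C (f z) + .C (f P) * .X := by
  simp [linearForm, restrictLine, dual_apply_eq_sum f z, dual_apply_eq_sum f P, mul_add,
    Finset.sum_add_distrib, Finset.sum_mul, mul_assoc]

/-- Restriction of a polynomial to the affine subspace `w + range φ`, in the coordinates given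
by `φ`. -/
noncomputable def restrictAffine (φ : (ι → K) →ₗ[K] (σ → K)) (w : σ → K) :
    MvPolynomial σ K →ₐ[K] MvPolynomial ι K :=
  aeval fun i ↦ C (w i) + linearForm (LinearMap.proj i ∘ₗ φ)

variable {φ : (ι → K) →ₗ[K] (σ → K)} {w : σ → K}

@[simp]
theorem eval_restrictAffine (φ : (ι → K) →ₗ[K] (σ → K)) (w : σ → K) (f : MvPolynomial σ K)
    (y : ι → K) : eval y (restrictAffine φ w f) = eval (w + φ y) f := by
  have hhom : ((aeval y).comp (restrictAffine φ w)) = aeval (w + φ y) := by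
    ext i
    simp [restrictAffine, aeval_eq_eval, eval_linearForm]
  simpa [aeval_eq_eval] using DFunLike.congr_fun hhom f

theorem restrictLine_restrictAffine (z P : ι → K) (f : MvPolynomial σ K) :
    restrictLine z P (restrictAffine φ w f) = restrictLine (w + φ z) (φ P) f := by
  have hhom : (restrictLine z P).comp (restrictAffine φ w) = restrictLine (w + φ z) (φ P) := by
    ext1 i
    rw [restrictAffine, AlgHom.comp_apply, aeval_X, map_add, restrictLine_linearForm]
    simp [restrictLine, add_assoc]
  exact DFunLike.congr_fun hhom f

theorem totalDegree_restrictAffine_le (f : MvPolynomial σ K) :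
    (restrictAffine φ w f).totalDegree ≤ f.totalDegree := by
  have linear (i : σ) : (C (w i) + linearForm (LinearMap.proj i ∘ₗ φ)).totalDegree ≤ 1 :=
    (totalDegree_add _ _).trans (max_le (by simp) (isHomogeneous_linearForm _).totalDegree_le)
  conv_lhs => rw [← support_sum_monomial_coeff f, map_sum]
  refine (totalDegree_finsetSum _ _).trans (Finset.sup_le fun s hs ↦ ?_)
  rw [restrictAffine, aeval_monomial, algebraMap_eq]
  refine (totalDegree_mul _ _).trans ?_
  rw [totalDegree_C, zero_add]
  refine (totalDegree_finsetProd _ _).trans (le_trans (Finset.sum_le_sum fun i _ ↦ ?_)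
    (le_totalDegree hs))
  exact (totalDegree_pow _ _).trans ((Nat.mul_le_mul_left _ (linear i)).trans_eq (mul_one _))

theorem isHomogeneous_restrictAffine_zero {f : MvPolynomial σ K} (hf : f.IsHomogeneous d) :
    (restrictAffine φ 0 f).IsHomogeneous d := by
  have := hf.aeval (n := 1) (fun i ↦ C ((0 : σ → K) i) + linearForm (LinearMap.proj i ∘ₗ φ))
    fun i ↦ by simpa using isHomogeneous_linearForm _
  simpa [restrictAffine] using this

-- The leading form of the restriction at `P` is `f (φ P)`.
theorem totalDegree_restrictAffine_le_of_eval_range_eq_zero [Fintype K] {f : MvPolynomial σ K}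
    (hf : f.IsHomogeneous (d + 1)) (hK : d + 1 ≤ Fintype.card K)
    (h : ∀ y, eval (φ y) f = 0) : (restrictAffine φ w f).totalDegree ≤ d := by
  have hle := (totalDegree_restrictAffine_le (φ := φ) (w := w) f).trans hf.totalDegree_le
  refine totalDegree_le_of_leading_eq_zero hle hK fun P ↦ ?_
  rw [← coeff_restrictLine (z := 0) hle, restrictLine_restrictAffine,
    coeff_restrictLine hf.totalDegree_le, homogeneousComponent_eq_self hf, h]

end Restriction

section Homogeneous

variable {K σ : Type*} [Field K] {f : MvPolynomial σ K} {d : ℕ}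

theorem eval_smul_of_isHomogeneous (hf : f.IsHomogeneous d) (c : K) (x : σ → K) :
    eval (c • x) f = c ^ d * eval x f := by
  rw [eval_eq, eval_eq, Finset.mul_sum]
  refine Finset.sum_congr rfl fun s hs ↦ ?_
  have hdeg : ∑ i ∈ s.support, s i = d := by
    rw [← Finsupp.degree_apply, Finsupp.degree_eq_weight_one, ← hf (mem_support_iff.1 hs)]
    rfl
  simp only [Pi.smul_apply, smul_eq_mul, mul_pow, Finset.prod_mul_distrib,
    Finset.prod_pow_eq_pow_sum, hdeg]
  ring

theorem eval_smul_eq_zero_iff (hf : f.IsHomogeneous d) {c : K} (hc : c ≠ 0) {x : σ → K} :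
    eval (c • x) f = 0 ↔ eval x f = 0 := by
  simp [eval_smul_of_isHomogeneous hf, hc]

end Homogeneous

/-- `G` has degree at most `d` and as many zeros over `K` as the Schwartz–Zippel bound allows. -/
structure AttainsSchwartzZippel {K : Type*} [Field K] [Fintype K] [DecidableEq K] {n : ℕ} (d : ℕ)
    (G : MvPolynomial (Fin (n + 1)) K) : Prop where
  totalDegree_le : G.totalDegree ≤ d
  card_zeros : #{y | eval y G = 0} = d * Fintype.card K ^ n

namespace AttainsSchwartzZippel

variable {K : Type*} [Field K] [Fintype K] [DecidableEq K] {n d : ℕ}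
  {G : MvPolynomial (Fin (n + 1)) K} {P v : Fin (n + 1) → K} (hG : AttainsSchwartzZippel d G)
include hG

theorem card_zeros_line (hP : eval P (homogeneousComponent d G) ≠ 0) (y : Fin (n + 1) → K) :
    #{l : K | eval (y + l • P) G = 0} = d := by
  refine card_translates_eq_of_le (O := Finset.univ) (g := fun l : K ↦ l • P) (by simp)
    (fun y ↦ eval y G = 0)
    (fun y _ ↦ card_zeros_line_le hG.totalDegree_le
      (restrictLine_ne_zero_of_leading hG.totalDegree_le hP)) ?_ (Finset.mem_univ y)
  simp only [hG.card_zeros, Finset.card_univ, Fintype.card_pi, Finset.prod_const, Fintype.card_fin]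
  ring

theorem exists_leading_ne_zero (hd₀ : 0 < d) (hd : d < Fintype.card K) :
    ∃ P, eval P (homogeneousComponent d G) ≠ 0 := by
  by_contra! hzero
  have hK : 0 < Fintype.card K ^ n := pow_pos (hd₀.trans hd) n
  have hG₀ : G ≠ 0 := by
    rintro rfl
    have := hG.card_zeros
    simp only [map_zero, Finset.filter_true, Finset.card_univ, Fintype.card_pi, Finset.prod_const,
      Fintype.card_fin, pow_succ'] at this
    exact hd.ne' (Nat.eq_of_mul_eq_mul_right hK this)
  obtain ⟨e, rfl⟩ := Nat.exists_eq_add_one.2 hd₀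
  have hdrop := totalDegree_le_of_leading_eq_zero hG.totalDegree_le hd.le hzero
  have := card_zeros_le_of_totalDegree_le hG₀ hdrop
  rw [hG.card_zeros] at this
  exact absurd (Nat.le_of_mul_le_mul_right this hK) (by omega)

theorem exists_slope (hd₀ : 0 < d) (hd : d * (d + 1) < 2 * Fintype.card K)
    (hP : eval P (homogeneousComponent d G) ≠ 0) (v y : Fin (n + 1) → K) :
    ∃ m₀ : K, (∀ s t : K, eval (y + s • v + t • P) G = 0 ↔ eval (y + (t - m₀ * s) • P) G = 0) ∧
      ∀ m : K, eval (v + m • P) (homogeneousComponent d G) = 0 → m = m₀ := by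
  have on_line (m c s : K) : y + s • v + (m * s + c) • P = (y + c • P) + s • (v + m • P) := by
    module
  obtain ⟨m₀, hm₀⟩ := exists_slope_of_lineCount_le
    (B := fun s t ↦ eval (y + s • v + t • P) G = 0) hd₀ hd
    (fun s ↦ hG.card_zeros_line hP _) fun m c ↦ by
      simp only [mem_fullLines, lineCount, on_line]
      exact line_subset_zeros_or_card_le hG.totalDegree_le
  refine ⟨m₀, by simpa using hm₀, fun m hm ↦ ?_⟩
  by_contra hne
  have hcount : #{s : K | eval (y + s • (v + m • P)) G = 0} = d := by
    rw [← hG.card_zeros_line hP y]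
    refine Finset.card_equiv (Equiv.mulLeft₀ (m - m₀) (sub_ne_zero.2 hne)) fun s ↦ ?_
    have := hm₀ s (m * s)
    simp only [zero_smul, add_zero, ← sub_mul] at this
    have hshift : y + s • (v + m • P) = y + s • v + (m * s) • P := by module
    rw [Finset.mem_filter_univ, Finset.mem_filter_univ, hshift, this]
    rfl
  rcases line_subset_zeros_or_card_lt (z := y) hG.totalDegree_le hm with hfull | hlt
  · simp only [hfull, Finset.filter_true, Finset.card_univ] at hcount
    nlinarith
  · exact hlt.ne hcount

theorem eval_add_smul_eq_zero_iff (hd₀ : 0 < d) (hd : d * (d + 1) < 2 * Fintype.card K)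
    (hv : eval v (homogeneousComponent d G) = 0) (y : Fin (n + 1) → K) (s : K) :
    eval (y + s • v) G = 0 ↔ eval y G = 0 := by
  obtain ⟨P, hP⟩ := hG.exists_leading_ne_zero hd₀ (by nlinarith)
  obtain ⟨m₀, hslope, hunique⟩ := hG.exists_slope hd₀ hd hP v y
  obtain rfl := hunique 0 (by simpa using hv)
  simpa using hslope s 0

theorem card_leading_eq_zero_le (hd₀ : 0 < d) (hd : d * (d + 1) < 2 * Fintype.card K) :
    #{v | eval v (homogeneousComponent d G) = 0} ≤ Fintype.card K ^ n := by
  obtain ⟨P, hP⟩ := hG.exists_leading_ne_zero hd₀ (by nlinarith)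
  let Z : Finset (Fin (n + 1) → K) := {v | eval v (homogeneousComponent d G) = 0}
  have injOn : Set.InjOn (fun x : (Fin (n + 1) → K) × K ↦ x.1 + x.2 • P)
      (Z ×ˢ (Finset.univ : Finset K) : Finset _) := by
    rintro ⟨v, l⟩ hv ⟨v', l'⟩ hv' heq
    simp only [Finset.coe_product, Set.mem_prod, Finset.mem_coe, Finset.mem_univ, true_and,
      Finset.mem_filter, Z, and_true] at hv hv' heq
    obtain ⟨m₀, -, hunique⟩ := hG.exists_slope hd₀ hd hP v 0
    have hv'_eq : v' = v + (l - l') • P := by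
      rw [sub_smul, add_sub, heq, add_sub_cancel_right]
    have hl : l - l' = 0 :=
      (hunique (l - l') (hv'_eq ▸ hv')).trans (hunique 0 (by simpa using hv)).symm
    rw [hl, zero_smul, add_zero] at hv'_eq
    rw [hv'_eq, sub_eq_zero.1 hl]
  have hcard := Finset.card_le_card_of_injOn (t := Finset.univ) _ (fun _ _ ↦ Finset.mem_univ _)
    injOn
  simp only [Finset.card_product, Finset.card_univ, Fintype.card_pi, Finset.prod_const,
    Fintype.card_fin, pow_succ] at hcard
  exact Nat.le_of_mul_le_mul_right hcard Fintype.card_pos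

end AttainsSchwartzZippel

-- Each leading form excludes at most `#K ^ n` vectors, all of these sets containing `0`.
theorem exists_forall_leading_ne_zero {K ι : Type*} [Field K] [Fintype K] [DecidableEq K]
    [Fintype ι] {n d : ℕ} (hι : Fintype.card ι ≤ Fintype.card K) (hd₀ : 0 < d)
    (hd : d * (d + 1) < 2 * Fintype.card K) {G : ι → MvPolynomial (Fin (n + 1)) K}
    (hG : ∀ i, AttainsSchwartzZippel d (G i)) :
    ∃ P, ∀ i, eval P (homogeneousComponent d (G i)) ≠ 0 := by
  by_contra! hbad
  let Z (i : ι) : Finset (Fin (n + 1) → K) := {v | eval v (homogeneousComponent d (G i)) = 0}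
  have zero_mem (i : ι) : 0 ∈ Z i := by
    simpa [Z, hd₀.ne'] using eval_smul_of_isHomogeneous
      (homogeneousComponent_isHomogeneous d (G i)) 0 0
  have hcover : (Finset.univ.erase 0 : Finset (Fin (n + 1) → K)) ⊆
      Finset.univ.biUnion fun i ↦ (Z i).erase 0 := by
    intro P hP
    obtain ⟨i, hi⟩ := hbad P
    simpa [Z, (Finset.mem_erase.1 hP).1] using ⟨i, hi⟩
  have hle := (Finset.card_le_card hcover).trans <|
    Finset.card_biUnion_le_card_mul _ _ (Fintype.card K ^ n - 1) fun i _ ↦ by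
      rw [Finset.card_erase_of_mem (zero_mem i)]
      exact Nat.sub_le_sub_right ((hG i).card_leading_eq_zero_le hd₀ hd) 1
  have hK := Fintype.one_lt_card (α := K)
  have hKn : 0 < Fintype.card K ^ n := pow_pos (by omega) n
  have := hle.trans (Nat.mul_le_mul_right _ hι)
  simp only [Finset.card_erase_of_mem (Finset.mem_univ _), Finset.card_univ, Fintype.card_pi,
    Finset.prod_const, Fintype.card_fin, pow_succ', Nat.mul_sub, mul_one] at this
  have := Nat.le_mul_of_pos_right (Fintype.card K) hKn
  omega

section HomogeneousPieces

variable {K σ V : Type*} [Field K] [AddCommGroup V] [Module K V]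
  {Φ h : MvPolynomial σ K} {c d e : ℕ}

theorem homogeneousComponent_mul_of_isHomogeneous (hΦ : Φ.IsHomogeneous d) (c : ℕ)
    (p : MvPolynomial σ K) :
    homogeneousComponent (c + d) (p * Φ) = homogeneousComponent c p * Φ := by
  have component (i : ℕ) : homogeneousComponent (c + d) (homogeneousComponent i p * Φ) =
      if i = c then homogeneousComponent i p * Φ else 0 := by
    rw [homogeneousComponent_of_mem ((homogeneousComponent_isHomogeneous i p).mul hΦ)]
    exact if_congr (by omega) rfl rfl
  conv_lhs => rw [← sum_homogeneousComponent p, Finset.sum_mul, map_sum]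
  simp only [component, Finset.sum_ite_eq', Finset.mem_range]
  split_ifs with hc
  · rfl
  · rw [homogeneousComponent_eq_zero _ _ (by omega), zero_mul]

instance finite_homogeneousSubmodule [Finite σ] (m : ℕ) :
    Module.Finite K (homogeneousSubmodule σ K m) :=
  Module.Finite.iff_fg.2 (homogeneousSubmodule_fg _ _ _)

theorem finrank_homogeneousSubmodule_fin (n m : ℕ) :
    finrank K (homogeneousSubmodule (Fin (n + 1)) K m) = (m + n).choose n := by
  have hset : {s : Fin (n + 1) →₀ ℕ | s.degree = m} =
      ((Finset.univ : Finset (Fin (n + 1))).finsuppAntidiag m : Set _) := by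
    ext s
    simp [Finset.mem_finsuppAntidiag, Finsupp.degree_eq_sum]
  have hsub : homogeneousSubmodule (Fin (n + 1)) K m =
      restrictSupport K {s : Fin (n + 1) →₀ ℕ | s.degree = m} :=
    homogeneousSubmodule_eq_finsupp_supported _ K m
  rw [hsub, finrank_eq_nat_card_basis (basisRestrictSupport K _), hset]
  simp only [Nat.card_eq_fintype_card, Fintype.card_coe, Finset.coe_sort_coe,
    Finset.card_finsuppAntidiag_nat_eq_choose, Finset.card_univ, Fintype.card_fin]
  rw [show n + 1 + m - 1 = m + n by omega, Nat.choose_symm_add]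

theorem finrank_map_mulRight_homogeneousSubmodule {g : MvPolynomial σ K} (hg : g ≠ 0) (m : ℕ) :
    finrank K ((homogeneousSubmodule σ K m).map (LinearMap.mulRight K g)) =
      finrank K (homogeneousSubmodule σ K m) :=
  (Submodule.equivMapOfInjective _ (fun _ _ h ↦ mul_right_cancel₀ hg h) _).finrank_eq.symm

-- Inclusion–exclusion for the multiples of `Φ` and of `h`, both killed by `Λ`, inside the forms
-- of degree `c + d + e`.
theorem finrank_add_le_of_isRelPrime [Finite σ] (hΦ : Φ.IsHomogeneous d) (hh : h.IsHomogeneous e)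
    (hΦ₀ : Φ ≠ 0) (hh₀ : h ≠ 0) (hrel : IsRelPrime Φ h) (Λ : MvPolynomial σ K →ₗ[K] V)
    (hΛΦ : ∀ p, Λ (p * Φ) = 0) (hΛh : ∀ p, Λ (p * h) = 0)
    (hΛ : (homogeneousSubmodule σ K (c + d + e)).map Λ = ⊤) :
    finrank K V + finrank K (homogeneousSubmodule σ K (c + e)) +
        finrank K (homogeneousSubmodule σ K (c + d)) ≤
      finrank K (homogeneousSubmodule σ K (c + d + e)) +
        finrank K (homogeneousSubmodule σ K c) := by
  let A := (homogeneousSubmodule σ K (c + e)).map (LinearMap.mulRight K Φ)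
  let B := (homogeneousSubmodule σ K (c + d)).map (LinearMap.mulRight K h)
  have inf_le : A ⊓ B ≤ (homogeneousSubmodule σ K c).map (LinearMap.mulRight K (Φ * h)) := by
    rintro _ ⟨⟨a, ha, rfl⟩, ⟨b, -, hab⟩⟩
    simp only [LinearMap.mulRight_apply] at hab
    obtain ⟨p, rfl⟩ : h ∣ a := hrel.symm.dvd_of_dvd_mul_right ⟨b, by rw [← hab, mul_comm]⟩
    refine ⟨homogeneousComponent c p, homogeneousComponent_isHomogeneous c p, ?_⟩
    have hp : homogeneousComponent c p * h = h * p := by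
      rw [← homogeneousComponent_mul_of_isHomogeneous hh, mul_comm h,
        homogeneousComponent_eq_self (by rw [mul_comm]; exact ha)]
    simp only [LinearMap.mulRight_apply]
    rw [← hp]
    ring
  let Λ' : homogeneousSubmodule σ K (c + d + e) →ₗ[K] V :=
    Λ.domRestrict (homogeneousSubmodule σ K (c + d + e))
  have sup_le : A ⊔ B ≤ (LinearMap.ker Λ').map (homogeneousSubmodule σ K (c + d + e)).subtype := by
    refine sup_le ?_ ?_
    · rintro _ ⟨a, ha, rfl⟩
      have : a * Φ ∈ homogeneousSubmodule σ K (c + d + e) := by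
        simpa only [mem_homogeneousSubmodule, add_right_comm] using IsHomogeneous.mul ha hΦ
      exact ⟨⟨_, this⟩, hΛΦ a, rfl⟩
    · rintro _ ⟨b, hb, rfl⟩
      exact ⟨⟨_, IsHomogeneous.mul hb hh⟩, hΛh b, rfl⟩
  have : FiniteDimensional K A := inferInstanceAs (FiniteDimensional K (Submodule.map _ _))
  have : FiniteDimensional K B := inferInstanceAs (FiniteDimensional K (Submodule.map _ _))
  have hsup := (Submodule.finrank_mono sup_le).trans (Submodule.finrank_map_le _ _)
  have hinf := Submodule.finrank_mono inf_le
  have hmodular := Submodule.finrank_sup_add_finrank_inf_eq A B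
  have hrank := LinearMap.finrank_range_add_finrank_ker Λ'
  rw [LinearMap.range_domRestrict, hΛ, finrank_top] at hrank
  rw [finrank_map_mulRight_homogeneousSubmodule hΦ₀,
    finrank_map_mulRight_homogeneousSubmodule hh₀] at hmodular
  rw [finrank_map_mulRight_homogeneousSubmodule (mul_ne_zero hΦ₀ hh₀)] at hinf
  omega

theorem finrank_le_mul_of_isRelPrime {Φ h : MvPolynomial (Fin 3) K} (hΦ : Φ.IsHomogeneous d)
    (hh : h.IsHomogeneous e) (hΦ₀ : Φ ≠ 0) (hh₀ : h ≠ 0) (hrel : IsRelPrime Φ h)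
    (Λ : MvPolynomial (Fin 3) K →ₗ[K] V) (hΛΦ : ∀ p, Λ (p * Φ) = 0) (hΛh : ∀ p, Λ (p * h) = 0)
    (hΛ : (homogeneousSubmodule (Fin 3) K (c + d + e)).map Λ = ⊤) : finrank K V ≤ d * e := by
  have two_mul_choose (m : ℕ) : 2 * (m + 2).choose 2 = (m + 2) * (m + 1) := by
    rw [Nat.choose_two_right, Nat.mul_div_cancel' (Nat.even_mul_pred_self _).two_dvd]
    rfl
  have := finrank_add_le_of_isRelPrime hΦ hh hΦ₀ hh₀ hrel Λ hΛΦ hΛh hΛ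
  simp only [finrank_homogeneousSubmodule_fin] at this
  have := two_mul_choose c
  have := two_mul_choose (c + d)
  have := two_mul_choose (c + e)
  have := two_mul_choose (c + d + e)
  nlinarith

end HomogeneousPieces

section Tangent

variable {K σ : Type*} [Field K]

open TrivSqZeroExt in
/-- Evaluation at the point `v + ε w` over the dual numbers: the value at `v` together with the
derivative at `v` in the direction `w`. -/
noncomputable def tangentEval (v w : σ → K) : MvPolynomial σ K →ₐ[K] DualNumber K :=
  aeval fun i ↦ inl (v i) + inr (w i)

theorem tangentEval_eq [Fintype σ] (v w : σ → K) (p : MvPolynomial σ K) :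
    tangentEval v w p = .inl (eval v p) + .inr (∑ i, w i * eval v (pderiv i p)) := by
  classical
  induction p using MvPolynomial.induction_on with
  | C a => simp [tangentEval, TrivSqZeroExt.algebraMap_eq_inl]
  | add p q hp hq =>
    simp only [map_add, hp, hq, TrivSqZeroExt.inl_add, mul_add, Finset.sum_add_distrib,
      TrivSqZeroExt.inr_add]
    abel
  | mul_X p i hp =>
    have hX : tangentEval v w (X i) = .inl (v i) + .inr (w i) := by simp [tangentEval]
    rw [map_mul, hp, hX]
    ext
    · simp
    · simp [pderiv_X, Pi.single_apply, mul_add, Finset.sum_add_distrib, Finset.mul_sum,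
        apply_ite (eval v), mul_comm, mul_left_comm, add_comm]

theorem exists_dual_apply_eq {ι V : Type*} [AddCommGroup V] [Module K V] {v : ι → V}
    (hv : LinearIndependent K v) (a : ι → K) : ∃ f : Dual K V, ∀ i, f (v i) = a i := by
  obtain ⟨g, hg⟩ := LinearMap.exists_leftInverse_of_injective _ (linearIndependent_iff_ker.1 hv)
  refine ⟨Finsupp.linearCombination K a ∘ₗ g, fun i ↦ ?_⟩
  have := LinearMap.congr_fun hg (Finsupp.single i 1)
  simp only [LinearMap.comp_apply, Finsupp.linearCombination_single, one_smul,
    LinearMap.id_apply] at this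
  simp [this]

theorem tangentEval_linearForm [Fintype σ] [DecidableEq σ] (v w : σ → K) (f : Dual K (σ → K)) :
    tangentEval v w (linearForm f) = .inl (f v) + .inr (f w) := by
  rw [dual_apply_eq_sum f v, dual_apply_eq_sum f w]
  ext <;> simp [linearForm, tangentEval, TrivSqZeroExt.algebraMap_eq_inl, TrivSqZeroExt.fst_sum,
    TrivSqZeroExt.snd_sum]

section Interpolation

variable [Finite σ] {ι : Type*} [Fintype ι] {v w : ι → σ → K}
  (hv : Pairwise fun i j ↦ LinearIndependent K ![v i, v j])
  (hw : ∀ i, LinearIndependent K ![v i, w i])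
include hv hw

-- A product of squares of linear forms vanishes to second order at all points but one.
theorem exists_isHomogeneous_isUnit_tangentEval {m : ℕ} (hm : 2 * Fintype.card ι ≤ m) (i : ι) :
    ∃ g : MvPolynomial σ K, g.IsHomogeneous m ∧ IsUnit (tangentEval (v i) (w i) g) ∧
      ∀ j ≠ i, tangentEval (v j) (w j) g = 0 := by
  classical
  have := Fintype.ofFinite σ
  have separate (j : ι) : ∃ f : Dual K (σ → K), f (v i) = 1 ∧ (j ≠ i → f (v j) = 0) := by
    by_cases hij : j = i
    · obtain ⟨f, hf⟩ := exists_dual_apply_eq (hw i) ![1, 0]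
      exact ⟨f, hf 0, fun h ↦ absurd hij h⟩
    · obtain ⟨f, hf⟩ := exists_dual_apply_eq (hv (Ne.symm hij)) ![1, 0]
      exact ⟨f, hf 0, fun _ ↦ hf 1⟩
  choose f hf_one hf_zero using separate
  refine ⟨(∏ j, linearForm (f j) ^ 2) * linearForm (f i) ^ (m - 2 * Fintype.card ι), ?_, ?_, ?_⟩
  · have hprod := IsHomogeneous.prod Finset.univ (fun j ↦ linearForm (f j) ^ 2) (fun _ ↦ 2)
      fun j _ ↦ by simpa using (isHomogeneous_linearForm (f j)).pow 2
    have := hprod.mul ((isHomogeneous_linearForm (f i)).pow (m - 2 * Fintype.card ι))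
    simp only [Finset.sum_const, Finset.card_univ, smul_eq_mul, one_mul] at this
    rwa [show Fintype.card ι * 2 + (m - 2 * Fintype.card ι) = m by omega] at this
  · simp [TrivSqZeroExt.isUnit_iff_isUnit_fst, tangentEval_linearForm, hf_one,
      TrivSqZeroExt.fst_pow]
  · intro j hj
    rw [map_mul, map_prod, Finset.prod_eq_zero (Finset.mem_univ j), zero_mul]
    rw [map_pow, tangentEval_linearForm, hf_zero j hj, TrivSqZeroExt.inl_zero, zero_add, pow_two,
      TrivSqZeroExt.inr_mul_inr]

theorem exists_isHomogeneous_tangentEval_eq {m : ℕ} (hm : 2 * Fintype.card ι ≤ m)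
    (u : ι → DualNumber K) :
    ∃ p : MvPolynomial σ K, p.IsHomogeneous (m + 1) ∧
      ∀ i, tangentEval (v i) (w i) p = u i := by
  classical
  have := Fintype.ofFinite σ
  choose g hg hg_unit hg_zero using exists_isHomogeneous_isUnit_tangentEval hv hw hm
  have adjust (i : ι) : ∃ l : Dual K (σ → K),
      tangentEval (v i) (w i) (g i) * tangentEval (v i) (w i) (linearForm l) = u i := by
    obtain ⟨r, hr⟩ := (hg_unit i).dvd (a := u i)
    obtain ⟨l, hl⟩ := exists_dual_apply_eq (hw i) ![r.fst, r.snd]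
    refine ⟨l, ?_⟩
    rw [tangentEval_linearForm, show l (v i) = r.fst from hl 0, show l (w i) = r.snd from hl 1,
      TrivSqZeroExt.inl_fst_add_inr_snd_eq, hr]
  choose l hl using adjust
  refine ⟨∑ i, g i * linearForm (l i), IsHomogeneous.sum _ _ _ fun i _ ↦
    (hg i).mul (isHomogeneous_linearForm (l i)), fun j ↦ ?_⟩
  rw [map_sum, Finset.sum_eq_single j
    (fun i _ hij ↦ by rw [map_mul, hg_zero i j hij.symm, zero_mul]) (by simp), map_mul, hl]

end Interpolation

end Tangent

theorem two_mul_card_le_of_tangentEval_eq_zero {K ι : Type*} [Field K] [Fintype ι] {d e : ℕ}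
    {Φ h : MvPolynomial (Fin 3) K} (hΦ : Φ.IsHomogeneous d) (hh : h.IsHomogeneous e)
    (hΦ₀ : Φ ≠ 0) (hh₀ : h ≠ 0) (hrel : IsRelPrime Φ h) {v w : ι → Fin 3 → K}
    (hv : Pairwise fun i j ↦ LinearIndependent K ![v i, v j])
    (hw : ∀ i, LinearIndependent K ![v i, w i])
    (hvΦ : ∀ i, tangentEval (v i) (w i) Φ = 0) (hvh : ∀ i, tangentEval (v i) (w i) h = 0) :
    2 * Fintype.card ι ≤ d * e := by
  let Λ : MvPolynomial (Fin 3) K →ₗ[K] (ι → DualNumber K) :=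
    LinearMap.pi fun i ↦ (tangentEval (v i) (w i)).toLinearMap
  have hΛ : (homogeneousSubmodule (Fin 3) K (2 * Fintype.card ι + 1 + d + e)).map Λ = ⊤ := by
    refine eq_top_iff.2 fun u _ ↦ ?_
    obtain ⟨p, hp, hpu⟩ := exists_isHomogeneous_tangentEval_eq hv hw
      (m := 2 * Fintype.card ι + d + e) (by omega) u
    exact ⟨p, by rwa [SetLike.mem_coe, add_right_comm _ 1, add_right_comm _ 1], funext hpu⟩
  have : Module.Finite K (DualNumber K) := inferInstanceAs (Module.Finite K (K × K))
  have hle := finrank_le_mul_of_isRelPrime hΦ hh hΦ₀ hh₀ hrel Λ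
    (fun p ↦ funext fun i ↦ by simp [Λ, hvΦ]) (fun p ↦ funext fun i ↦ by simp [Λ, hvh]) hΛ
  rwa [Module.finrank_pi_fintype, Finset.sum_const, Finset.card_univ, smul_eq_mul,
    show finrank K (DualNumber K) = 2 from (Module.finrank_prod).trans (by simp), mul_comm] at hle

theorem derivative_restrictLine {K σ : Type*} [Field K] [Fintype σ] (z P : σ → K)
    (G : MvPolynomial σ K) : Polynomial.derivative (restrictLine z P G) =
      ∑ i, Polynomial.C (P i) * restrictLine z P (pderiv i G) := by
  classical
  induction G using MvPolynomial.induction_on with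
  | C a => simp [restrictLine]
  | add G H hG hH => simp only [map_add, hG, hH, mul_add, Finset.sum_add_distrib]
  | mul_X G i hG =>
    have hX : restrictLine z P (X i) = .C (z i) + .C (P i) * .X := by simp [restrictLine]
    have hpderiv (j : σ) : restrictLine z P (pderiv j (G * X i)) =
        (if j = i then restrictLine z P G else 0) +
          restrictLine z P (pderiv j G) * restrictLine z P (X i) := by
      rw [pderiv_mul, pderiv_X, map_add, map_mul, map_mul, add_comm]
      by_cases hij : j = i <;> simp [hij]
    have hderiv : Polynomial.derivative (restrictLine z P (X i)) = .C (P i) := by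
      simp [hX]
    simp only [map_mul, Polynomial.derivative_mul, hG, hderiv, hpderiv, mul_add,
      Finset.sum_add_distrib, Finset.sum_mul, mul_ite, mul_zero, Finset.sum_ite_eq',
      Finset.mem_univ, if_true, mul_assoc]
    ring

section FrobeniusPolar

variable {K σ : Type*} [Field K] [Fintype K]

/-- The polar of the form `Φ` with respect to the Frobenius image of the current point. On the
points of `Φ` over `K` it vanishes along with its derivative in every direction tangent to `Φ`. -/
noncomputable def frobeniusPolar [Fintype σ] (Φ : MvPolynomial σ K) : MvPolynomial σ K :=
  ∑ i, X i ^ Fintype.card K * pderiv i Φ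

variable {Φ : MvPolynomial σ K} {d : ℕ} (hΦ : Φ.IsHomogeneous d)

theorem tangentEval_X_pow_card (v w : σ → K) (i : σ) :
    tangentEval v w (X i) ^ Fintype.card K = .inl (v i) := by
  ext
  · simp [tangentEval, TrivSqZeroExt.fst_pow, FiniteField.pow_card]
  · simp [TrivSqZeroExt.snd_pow]

include hΦ

theorem isHomogeneous_frobeniusPolar [Fintype σ] :
    (frobeniusPolar Φ).IsHomogeneous (Fintype.card K + (d - 1)) :=
  IsHomogeneous.sum _ _ _ fun i _ ↦
    IsHomogeneous.mul (by simpa using (isHomogeneous_X K i).pow (Fintype.card K)) hΦ.pderiv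

theorem tangentEval_frobeniusPolar [Fintype σ] {v w : σ → K} (h : tangentEval v w Φ = 0) :
    tangentEval v w (frobeniusPolar Φ) = 0 := by
  have euler := congrArg (tangentEval v w) hΦ.sum_X_mul_pderiv
  have tangent : ∑ i, w i * eval v (pderiv i Φ) = 0 := by
    simpa [tangentEval_eq] using congrArg TrivSqZeroExt.snd h
  have hX (i : σ) : tangentEval v w (X i) = .inl (v i) + .inr (w i) := by simp [tangentEval]
  have hinr (i : σ) : (.inr (w i) : DualNumber K) * tangentEval v w (pderiv i Φ) =
      .inr (w i * eval v (pderiv i Φ)) := by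
    ext <;> simp [tangentEval_eq]
  simp only [map_sum, map_mul, hX, add_mul, Finset.sum_add_distrib, hinr, map_nsmul, h,
    smul_zero] at euler
  rw [← TrivSqZeroExt.inr_sum, tangent, TrivSqZeroExt.inr_zero, add_zero] at euler
  simpa only [frobeniusPolar, map_sum, map_mul, map_pow, tangentEval_X_pow_card] using euler

theorem restrictLine_frobeniusPolar [Fintype σ] (z P : σ → K) :
    restrictLine z P (frobeniusPolar Φ) = d • restrictLine z P Φ +
      (.X ^ Fintype.card K - .X) * Polynomial.derivative (restrictLine z P Φ) := by
  have hX (i : σ) : restrictLine z P (X i) = .C (z i) + .C (P i) * .X := by simp [restrictLine]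
  have hXpow (i : σ) : restrictLine z P (X i) ^ Fintype.card K =
      restrictLine z P (X i) + (.X ^ Fintype.card K - .X) * .C (P i) := by
    rw [← FiniteField.expand_card, hX]
    simp
    ring
  rw [← map_nsmul, ← hΦ.sum_X_mul_pderiv, derivative_restrictLine, frobeniusPolar]
  simp only [map_sum, map_mul, map_pow, hXpow, add_mul, Finset.sum_add_distrib, Finset.mul_sum,
    mul_assoc]

omit hΦ in
theorem isCoprime_X_pow_card_sub_X {u : Polynomial K} (hu : ∀ a, u.eval a ≠ 0) :
    IsCoprime (Polynomial.X ^ Fintype.card K - Polynomial.X) u := by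
  have hmonic : (Polynomial.X ^ Fintype.card K - Polynomial.X : Polynomial K).Monic :=
    Polynomial.monic_X_pow_sub (by rw [Polynomial.degree_X]; exact_mod_cast Fintype.one_lt_card)
  have hroots := FiniteField.roots_X_pow_card_sub_X K
  rw [← Polynomial.prod_multiset_X_sub_C_of_monic_of_roots_card_eq hmonic
    (by rw [hroots, FiniteField.X_pow_card_sub_X_natDegree_eq K Fintype.one_lt_card]; rfl), hroots]
  refine IsCoprime.prod_left fun a _ ↦ ?_
  rw [(Polynomial.irreducible_X_sub_C a).coprime_iff_not_dvd, Polynomial.dvd_iff_isRoot]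
  exact hu a

theorem not_dvd_frobeniusPolar [Fintype σ] (hd : (d : K) ≠ 0) {z P : σ → K} (hP : eval P Φ ≠ 0)
    (hline : ∀ l : K, eval (z + l • P) Φ ≠ 0) : ¬ Φ ∣ frobeniusPolar Φ := by
  intro hdvd
  let u := restrictLine z P Φ
  have hd₀ : d ≠ 0 := by
    rintro rfl
    simp at hd
  have hcoeff : u.coeff d = eval P Φ := by
    rw [coeff_restrictLine hΦ.totalDegree_le, homogeneousComponent_eq_self hΦ]
  have hdeg : u.natDegree = d :=
    (natDegree_restrictLine_le hΦ.totalDegree_le).antisymm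
      (Polynomial.le_natDegree_of_ne_zero (by rwa [hcoeff]))
  have hu : u ∣ Polynomial.derivative u := by
    have := map_dvd (restrictLine z P) hdvd
    rw [restrictLine_frobeniusPolar hΦ, dvd_add_right (by simp [nsmul_eq_mul])] at this
    exact (isCoprime_X_pow_card_sub_X (u := u) (by simpa [u] using hline)).symm.dvd_of_dvd_mul_left
      this
  have hderiv : Polynomial.derivative u = 0 :=
    Polynomial.eq_zero_of_dvd_of_natDegree_lt hu
      (Polynomial.natDegree_derivative_lt (by rwa [hdeg]))
  have := Polynomial.coeff_derivative u (d - 1)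
  rw [hderiv, Nat.sub_add_cancel (Nat.one_le_iff_ne_zero.2 hd₀), hcoeff, Polynomial.coeff_zero,
    ← Nat.cast_succ, Nat.succ_eq_add_one, Nat.sub_add_cancel (Nat.one_le_iff_ne_zero.2 hd₀)] at this
  exact mul_ne_zero hP hd this.symm

end FrobeniusPolar

theorem exists_tangent {K σ : Type*} [Field K] [Fintype σ] (hσ : 2 < Fintype.card σ)
    {Φ : MvPolynomial σ K} {v : σ → K} (hv : v ≠ 0) (hΦ : eval v Φ = 0) :
    ∃ w, LinearIndependent K ![v, w] ∧ tangentEval v w Φ = 0 := by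
  let D : (σ → K) →ₗ[K] K := ∑ i, (eval v (pderiv i Φ)) • LinearMap.proj i
  have hD : ¬ LinearMap.ker D ≤ K ∙ v := fun hle ↦ by
    have := LinearMap.finrank_range_add_finrank_ker D
    have := (LinearMap.range D).finrank_le
    have := Submodule.finrank_mono hle
    simp only [finrank_span_singleton hv, finrank_self, finrank_fintype_fun_eq_card] at *
    omega
  obtain ⟨w, hw, hvw⟩ := SetLike.not_le_iff_exists.1 hD
  refine ⟨w, (LinearIndependent.pair_iff' hv).2 fun a ha ↦ hvw ?_, ?_⟩
  · exact Submodule.mem_span_singleton.2 ⟨a, ha⟩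
  · have : ∑ i, w i * eval v (pderiv i Φ) = 0 := by
      simpa [D, mul_comm] using hw
    simp [tangentEval_eq, hΦ, this]

theorem one_le_totalDegree_of_not_isUnit {K σ : Type*} [Field K] {D : MvPolynomial σ K} (h₀ : D ≠ 0)
    (hD : ¬ IsUnit D) : 1 ≤ D.totalDegree := by
  by_contra! h
  obtain ⟨a, rfl⟩ : ∃ a, D = C a := ⟨_, totalDegree_eq_zero_iff_eq_C.1 (Nat.lt_one_iff.1 h)⟩
  exact hD ((isUnit_iff_ne_zero.2 (by simpa using h₀)).map C)

section PlaneCurve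

variable {K : Type*} [Field K] [Fintype K] [DecidableEq K] {Φ D : MvPolynomial (Fin 3) K} {d : ℕ}
  (hΦ : Φ.IsHomogeneous d) (hinf : ∀ x : K × K, x ≠ 0 → eval ![x.1, x.2, 0] Φ ≠ 0)

include hΦ hinf

theorem card_affine_zeros_add_card_le_of_dvd (hD : D ∣ Φ) (hD₁ : 1 ≤ D.totalDegree) :
    #{x : K × K | eval ![x.1, x.2, 1] D = 0} + Fintype.card K ≤
      D.totalDegree * (Fintype.card K + 1) := by
  have hline (z : Fin 3 → K) {x : K × K} (hx : x ≠ 0) :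
      #{l : K | eval (z + l • ![x.1, x.2, 0]) D = 0} ≤ D.totalDegree :=
    card_zeros_line_le le_rfl <| ne_zero_of_dvd_ne_zero
      (restrictLine_ne_zero_of_leading hΦ.totalDegree_le
        (by simpa [homogeneousComponent_eq_self hΦ] using hinf x hx))
      (map_dvd (restrictLine z ![x.1, x.2, 0]) hD)
  have hcol (s : K) : #{t | eval ![s, t, 1] D = 0} ≤ D.totalDegree := by
    simpa using hline ![s, 0, 1] (x := (0, 1)) (by simp)
  have hslope (m c : K) : lineCount (fun s t ↦ eval ![s, t, 1] D = 0) m c ≤ D.totalDegree := by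
    simpa [lineCount, add_comm, mul_comm] using hline ![0, c, 1] (x := (1, m)) (by simp)
  rw [Finset.card_filter, Fintype.sum_prod_type]
  simpa only [← Finset.card_filter] using sum_card_column_add_card_le hD₁ hcol hslope

theorem two_mul_card_affine_zeros_le_of_irreducible (hd : (d : K) ≠ 0) (hirr : Irreducible Φ) :
    2 * #{x : K × K | eval ![x.1, x.2, 1] Φ = 0} ≤ d * (Fintype.card K + (d - 1)) := by
  have hrel : IsRelPrime Φ (frobeniusPolar Φ) := hirr.isRelPrime_iff_not_dvd.2 <|
    not_dvd_frobeniusPolar hΦ hd (P := ![1, 0, 0]) (hinf (1, 0) (by simp)) (z := ![0, 1, 0])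
      fun l ↦ by simpa using hinf (l, 1) (by simp)
  have hpolar : frobeniusPolar Φ ≠ 0 := by
    intro h
    exact hirr.not_isUnit (isRelPrime_zero_right.1 (h ▸ hrel))
  let point (x : {x : K × K // eval ![x.1, x.2, 1] Φ = 0}) : Fin 3 → K := ![x.1.1, x.1.2, 1]
  have point_ne (x) : point x ≠ 0 := fun h ↦ one_ne_zero (congrFun h 2)
  choose w hw htangent using fun x ↦ exists_tangent (by simp) (point_ne x) x.2
  have hpoint : Pairwise fun x y ↦ LinearIndependent K ![point x, point y] := by
    intro x y hxy
    refine (LinearIndependent.pair_iff' (point_ne x)).2 fun a ha ↦ hxy ?_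
    obtain rfl : a = 1 := by simpa [point] using congrFun ha 2
    exact Subtype.ext (Prod.ext (by simpa [point] using congrFun ha 0)
      (by simpa [point] using congrFun ha 1))
  have := two_mul_card_le_of_tangentEval_eq_zero hΦ (isHomogeneous_frobeniusPolar hΦ) hirr.ne_zero
    hpolar hrel hpoint hw htangent fun x ↦ tangentEval_frobeniusPolar hΦ (htangent x)
  rwa [Fintype.card_subtype] at this

theorem card_affine_zeros_add_two_mul_card_le_of_mul {D D' : MvPolynomial (Fin 3) K}
    (hfac : Φ = D * D') (hD : ¬ IsUnit D) (hD' : ¬ IsUnit D') :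
    #{x : K × K | eval ![x.1, x.2, 1] Φ = 0} + 2 * Fintype.card K ≤ d * (Fintype.card K + 1) := by
  have hΦ₀ : Φ ≠ 0 := by
    rintro rfl
    exact hinf (1, 0) (by simp) (map_zero _)
  have hD₀ : D ≠ 0 := left_ne_zero_of_mul (hfac ▸ hΦ₀)
  have hD'₀ : D' ≠ 0 := right_ne_zero_of_mul (hfac ▸ hΦ₀)
  have hdeg : D.totalDegree + D'.totalDegree = d := by
    rw [← totalDegree_mul_of_isDomain hD₀ hD'₀, ← hfac, hΦ.totalDegree hΦ₀]
  have hcount : #{x : K × K | eval ![x.1, x.2, 1] Φ = 0} ≤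
      #{x : K × K | eval ![x.1, x.2, 1] D = 0} + #{x : K × K | eval ![x.1, x.2, 1] D' = 0} := by
    simp only [hfac, map_mul, mul_eq_zero, Finset.filter_or]
    exact Finset.card_union_le _ _
  have := card_affine_zeros_add_card_le_of_dvd hΦ hinf (Dvd.intro _ hfac.symm)
    (one_le_totalDegree_of_not_isUnit hD₀ hD)
  have := card_affine_zeros_add_card_le_of_dvd hΦ hinf (Dvd.intro_left _ hfac.symm)
    (one_le_totalDegree_of_not_isUnit hD'₀ hD')
  rw [← hdeg, add_mul]
  omega

end PlaneCurve

theorem card_plane_zeros_lt {K σ : Type*} [Field K] [Fintype K] [DecidableEq K] {q : ℕ} (hq : 2 < q)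
    (hK : Fintype.card K = q ^ 2) {f : MvPolynomial σ K} (hf : f.IsHomogeneous (q + 1))
    {u v : σ → K} (huv : ∀ x : K × K, x ≠ 0 → eval (x.1 • u + x.2 • v) f ≠ 0) (o : σ → K) :
    #{x : K × K | eval (o + (x.1 • u + x.2 • v)) f = 0} < q ^ 3 := by
  let Φ := restrictAffine (Fintype.linearCombination K ![u, v, o]) 0 f
  have hΦ : Φ.IsHomogeneous (q + 1) := isHomogeneous_restrictAffine_zero hf
  have hinf (x : K × K) (hx : x ≠ 0) : eval ![x.1, x.2, 0] Φ ≠ 0 := by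
    simpa [Φ, Fintype.linearCombination_apply, Fin.sum_univ_three] using huv x hx
  have hcount : #{x : K × K | eval (o + (x.1 • u + x.2 • v)) f = 0} =
      #{x : K × K | eval ![x.1, x.2, 1] Φ = 0} := by
    simp [Φ, Fintype.linearCombination_apply, Fin.sum_univ_three, add_comm]
  have hd : ((q + 1 : ℕ) : K) ≠ 0 := by
    have hq₀ : (q : K) = 0 := by simpa [hK] using FiniteField.cast_card_eq_zero K
    simp [hq₀]
  have hΦ₀ : Φ ≠ 0 := by
    intro h
    exact hinf (1, 0) (by simp) (by simp [h])
  have hunit : ¬ IsUnit Φ := fun h ↦ by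
    have := isUnit_iff_totalDegree_of_isReduced.1 h |>.2
    rw [hΦ.totalDegree hΦ₀] at this
    omega
  rw [hcount]
  rcases irreducible_or_factor hunit with hirr | ⟨D, D', hD, hD', hfac⟩
  · have := two_mul_card_affine_zeros_le_of_irreducible hΦ hinf hd hirr
    rw [hK, Nat.add_sub_cancel] at this
    nlinarith
  · have := card_affine_zeros_add_two_mul_card_le_of_mul hΦ hinf hfac hD hD'
    rw [hK] at this
    nlinarith

section BoseBurton

variable {K V : Type*} [Field K] [AddCommGroup V] [Module K V] [Finite V] {Z : Set V}
  (hsmul : ∀ (c : K), ∀ x ∈ Z, c • x ∈ Z)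
  (hpair : ∀ u v : V, ∃ a b : K, (a, b) ≠ 0 ∧ a • u + b • v ∈ Z)
  (hcard : Nat.card V = Nat.card K * Z.ncard)

include hsmul hpair hcard

-- If `u`, `v` lie in `Z` but `u + v` does not, then `(x, c) ↦ x + c • (u + v)` maps `Z × K` onto
-- `V`, so it is injective; but `(u, -1)` and `(-v, 0)` have the same image.
theorem add_mem_of_forall_pair {u v : V} (hu : u ∈ Z) (hv : v ∈ Z) : u + v ∈ Z := by
  by_contra hR
  have : Finite K := Nat.finite_of_card_ne_zero <| left_ne_zero_of_mul (hcard ▸ Nat.card_pos.ne')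
  let g (x : Z × K) : V := x.1 + x.2 • (u + v)
  have hsurj : Function.Surjective g := by
    intro y
    obtain ⟨a, b, hab, hZ⟩ := hpair y (u + v)
    have ha : a ≠ 0 := by
      rintro rfl
      have hb : b ≠ 0 := by
        rintro rfl
        exact hab rfl
      exact hR (by simpa [hb] using hsmul b⁻¹ _ hZ)
    refine ⟨(⟨_, hsmul a⁻¹ _ hZ⟩, -(a⁻¹ * b)), ?_⟩
    simp only [g]
    rw [smul_add, smul_smul, smul_smul, inv_mul_cancel₀ ha, one_smul, neg_smul,
      add_neg_cancel_right]
  have hinj : Function.Injective g := (hsurj.bijective_of_nat_card_le <| by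
    rw [Nat.card_prod, Nat.card_coe_set_eq, hcard, mul_comm]).1
  have hne := @hinj (⟨u, hu⟩, -1) (⟨-v, by simpa using hsmul (-1) v hv⟩, 0) (by simp [g])
  simp at hne

theorem exists_submodule_of_forall_pair : ∃ π : Submodule K V, (π : Set V) = Z := by
  obtain ⟨a, b, -, hZ⟩ := hpair 0 0
  exact ⟨{ carrier := Z
           add_mem' := add_mem_of_forall_pair hsmul hpair hcard
           zero_mem' := by simpa using hsmul 0 _ hZ
           smul_mem' := fun c x hx ↦ hsmul c x hx }, rfl⟩

end BoseBurton

section PlaneSection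

variable {K σ : Type*} [Field K] [Fintype K] [DecidableEq K] {f : MvPolynomial σ K} {w v p : σ → K}

-- Both sides count zeros in an affine chart of the plane spanned by `w`, `v`, `p`; the chart on the
-- right omits the line `⟨w, v⟩`, which contains no zero of the chart on the left.
theorem card_chart_zeros_le_of_line {d : ℕ} (hf : f.IsHomogeneous d)
    (hline : ∀ s : K, eval (w + s • v) f ≠ 0) :
    #{x : K × K | eval (w + x.1 • v + x.2 • p) f = 0} ≤
      #{x : K × K | eval (p + (x.1 • w + x.2 • v)) f = 0} := by
  have ne_zero {x : K × K} (hx : eval (w + x.1 • v + x.2 • p) f = 0) : x.2 ≠ 0 := fun h ↦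
    hline x.1 (by simpa [h] using hx)
  refine Finset.card_le_card_of_injOn (fun x ↦ (x.2⁻¹, x.2⁻¹ * x.1)) ?_ ?_
  · intro x hx
    simp only [Finset.coe_filter, Finset.mem_univ, true_and, Set.mem_ofPred_eq] at hx ⊢
    have hpt : x.2⁻¹ • (w + x.1 • v + x.2 • p) = p + (x.2⁻¹ • w + (x.2⁻¹ * x.1) • v) := by
      rw [smul_add, inv_smul_smul₀ (ne_zero hx)]
      module
    rwa [← hpt, eval_smul_eq_zero_iff hf (inv_ne_zero (ne_zero hx))]
  · intro x hx y hy hxy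
    simp only [Finset.coe_filter, Finset.mem_univ, true_and, Set.mem_ofPred_eq] at hx hy
    obtain ⟨hsnd, hmul⟩ := Prod.mk.inj hxy
    rw [hsnd] at hmul
    exact Prod.ext (mul_left_cancel₀ (inv_ne_zero (ne_zero hy)) hmul) (inv_inj.1 hsnd)

variable {q : ℕ} (hK : Fintype.card K = q ^ 2) (hf : f.IsHomogeneous (q + 1))
  (hcol : ∀ s : K, #{t : K | eval (w + s • v + t • p) f = 0} = q)

include hK hf hcol

theorem exists_eval_eq_zero_of_card_column (hq : 2 < q) (hv : eval v f ≠ 0) :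
    ∃ s : K, eval (w + s • v) f = 0 := by
  by_contra! hnone
  have hline (x : K × K) (hx : x ≠ 0) : eval (x.1 • w + x.2 • v) f ≠ 0 := by
    obtain ⟨a, b⟩ := x
    by_cases ha : a = 0
    · subst ha
      have hb : b ≠ 0 := by
        rintro rfl
        exact hx rfl
      simpa [eval_smul_eq_zero_iff hf hb] using hv
    · have hpt : a • w + b • v = a • (w + (a⁻¹ * b) • v) := by
        rw [smul_add, mul_smul, smul_inv_smul₀ ha]
      rw [hpt, Ne, eval_smul_eq_zero_iff hf ha]
      exact hnone _
  have hcount : #{x : K × K | eval (w + x.1 • v + x.2 • p) f = 0} = q ^ 3 := by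
    rw [Finset.card_filter, Fintype.sum_prod_type]
    simp only [← Finset.card_filter, hcol, Finset.sum_const, Finset.card_univ, hK, smul_eq_mul]
    ring
  have := card_chart_zeros_le_of_line (p := p) hf hnone
  have := card_plane_zeros_lt hq hK hf hline p
  omega

theorem card_zeros_line_eq_one_or_eq_add_one (hq : 2 < q) (hinf : ∀ m : K, eval (v + m • p) f ≠ 0) :
    #{l : K | eval (w + l • v) f = 0} = 1 ∨ #{l : K | eval (w + l • v) f = 0} = q + 1 := by
  have on_line (m c s : K) : w + s • v + (m * s + c) • p = (w + c • p) + s • (v + m • p) := by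
    module
  have hcol' (m c s : K) :
      #{t : K | eval ((w + c • p) + s • (v + m • p) + t • p) f = 0} = q := by
    rw [← hcol s]
    refine Finset.card_equiv (Equiv.addLeft (m * s + c)) fun t ↦ ?_
    rw [Finset.mem_filter_univ, Finset.mem_filter_univ, ← on_line, Equiv.coe_addLeft,
      add_smul (m * s + c) t, ← add_assoc]
  have := lineCount_eq_one_or_eq_add_one (B := fun s t ↦ eval (w + s • v + t • p) f = 0) hK hcol
    (fun m c ↦ by
      obtain ⟨s, hs⟩ := exists_eval_eq_zero_of_card_column hK hf (hcol' m c) hq (hinf m)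
      exact Finset.card_pos.2 ⟨s, by simpa [on_line] using hs⟩)
    (fun m c ↦ by
      simp only [lineCount, on_line]
      exact card_zeros_line_le hf.totalDegree_le (restrictLine_ne_zero_of_leading hf.totalDegree_le
        (by simpa [homogeneousComponent_eq_self hf] using hinf m))) 0 0
  simpa [lineCount] using this

end PlaneSection

section ProjectiveCount

theorem ncard_onePoint {α : Type*} [Fintype α] (Z : Set (OnePoint α)) [DecidablePred (· ∈ Z)] :
    Z.ncard = #{a : α | (a : OnePoint α) ∈ Z} + if OnePoint.infty ∈ Z then 1 else 0 := by
  have hfinite : #{a : α | (a : OnePoint α) ∈ Z} =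
      ((↑) '' {a : α | (a : OnePoint α) ∈ Z} : Set (OnePoint α)).ncard := by
    rw [Set.ncard_image_of_injective _ OnePoint.coe_injective, ← Set.ncard_coe_finset,
      Finset.coe_filter_univ]
  rw [hfinite]
  split_ifs with h
  · rw [← Set.ncard_insert_of_notMem (a := OnePoint.infty) (by simp)]
    congr 1
    ext x
    induction x using OnePoint.rec with simp [h]
  · congr 1
    ext x
    induction x using OnePoint.rec with simp [h]

theorem ncard_cone {K V : Type*} [Field K] [Finite K] [AddCommGroup V] [Module K V] [Finite V]
    {Z : Set V} (hzero : 0 ∈ Z) (hsmul : ∀ (c : K), ∀ x ∈ Z, c • x ∈ Z) :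
    Z.ncard = (Nat.card K - 1) * {P : Projectivization K V | P.rep ∈ Z}.ncard + 1 := by
  have hprod : Z \ {0} = (fun x : K × Projectivization K V ↦ x.1 • x.2.rep) ''
      ({0}ᶜ ×ˢ {P | P.rep ∈ Z}) := by
    ext x
    constructor
    · rintro ⟨hx, hx₀⟩
      obtain ⟨a, ha⟩ := Projectivization.exists_smul_eq_mk_rep K x hx₀
      refine ⟨(↑a⁻¹, .mk K x hx₀), ⟨a⁻¹.ne_zero, ?_⟩, ?_⟩
      · change (Projectivization.mk K x hx₀).rep ∈ Z
        exact ha ▸ hsmul a x hx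
      · simp [← ha, Units.smul_def, smul_smul]
    · rintro ⟨⟨c, P⟩, ⟨hc, hP⟩, rfl⟩
      exact ⟨hsmul c _ hP, smul_ne_zero hc P.rep_nonzero⟩
  have hinj : Set.InjOn (fun x : K × Projectivization K V ↦ x.1 • x.2.rep)
      ({0}ᶜ ×ˢ {P | P.rep ∈ Z}) := by
    rintro ⟨c, P⟩ ⟨hc, -⟩ ⟨c', P'⟩ - heq
    obtain rfl : P = P' := by
      rw [← P.mk_rep, ← P'.mk_rep, Projectivization.mk_eq_mk_iff']
      exact ⟨c⁻¹ * c', by rw [mul_smul]; exact (inv_smul_eq_iff₀ hc).2 heq.symm⟩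
    exact congrArg (·, P) (smul_left_injective K P.rep_nonzero heq)
  rw [← Set.ncard_sdiff_singleton_add_one hzero, hprod, hinj.ncard_image,
    Set.ncard_prod, Set.ncard_compl, Set.ncard_singleton]

theorem projPts_range {F : Type} [Field F] {m n : ℕ} {φ : (Fin m → F) →ₗ[F] (Fin n → F)}
    (hφ : Function.Injective φ) :
    projPts (LinearMap.range φ) = Set.range (Projectivization.map φ hφ) := by
  ext P
  rw [projPts, Set.mem_ofPred_eq, Projectivization.submodule_eq,
    Submodule.span_singleton_le_iff_mem]
  constructor
  · rintro ⟨y, hy⟩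
    have hy₀ : y ≠ 0 := by
      rintro rfl
      exact P.rep_nonzero (by rw [← hy, map_zero])
    exact ⟨.mk F y hy₀, by simp [Projectivization.map_mk, hy]⟩
  · rintro ⟨R, rfl⟩
    induction R with | h y hy =>
    obtain ⟨a, ha⟩ := Projectivization.exists_smul_eq_mk_rep F (φ y)
      ((map_ne_zero_iff φ hφ).2 hy)
    exact ⟨a • y, by rw [Projectivization.map_mk, ← ha]; simp [Units.smul_def]⟩

variable {F : Type} [Field F] {n d : ℕ} {f : MvPolynomial (Fin n) F} (hf : f.IsHomogeneous d)
include hf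

theorem mk_mem_hypersurfacePts {x : Fin n → F} (hx : x ≠ 0) :
    Projectivization.mk F x hx ∈ hypersurfacePts f ↔ eval x f = 0 := by
  obtain ⟨a, ha⟩ := Projectivization.exists_smul_eq_mk_rep F x hx
  rw [hypersurfacePts, Set.mem_ofPred_eq, ← ha, Units.smul_def, eval_smul_eq_zero_iff hf a.ne_zero]

theorem ncard_zeros [Finite F] (hd : d ≠ 0) (W : Submodule F (Fin n → F)) :
    {x ∈ W | eval x f = 0}.ncard =
      (Nat.card F - 1) * (hypersurfacePts f ∩ projPts W).ncard + 1 := by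
  have hpts : hypersurfacePts f ∩ projPts W = {P | P.rep ∈ {x ∈ W | eval x f = 0}} := by
    ext P
    simp [hypersurfacePts, projPts, Projectivization.submodule_eq, and_comm]
  rw [hpts]
  refine ncard_cone ⟨W.zero_mem, ?_⟩ fun c x hx ↦ ⟨W.smul_mem c hx.1, ?_⟩
  · simpa [hd] using eval_smul_of_isHomogeneous hf 0 0
  · rw [eval_smul_of_isHomogeneous hf, hx.2, mul_zero]

section Line

variable [Fintype F] {L : Submodule F (Fin n → F)} (hL : finrank F L = 2)
  {v w : Fin n → F} (hv : v ∈ L) (hw : w ∈ L) (hv₀ : v ≠ 0) (hwv : w ∉ F ∙ v)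
include hL hv hw hv₀ hwv

theorem ncard_line [DecidableEq F] :
    (hypersurfacePts f ∩ projPts L).ncard =
      #{l : F | eval (w + l • v) f = 0} + if eval v f = 0 then 1 else 0 := by
  have hind : LinearIndependent F ![v, w] :=
    (LinearIndependent.pair_iff' hv₀).2 fun a ha ↦ hwv (Submodule.mem_span_singleton.2 ⟨a, ha⟩)
  let φ := Fintype.linearCombination F ![v, w]
  have hφ : Function.Injective φ := hind.fintypeLinearCombination_injective
  have hrange : LinearMap.range φ = L := by
    refine Submodule.eq_of_le_of_finrank_eq ?_ ?_
    · rintro - ⟨y, rfl⟩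
      simpa [φ, Fintype.linearCombination_apply] using
        L.add_mem (L.smul_mem (y 0) hv) (L.smul_mem (y 1) hw)
    · rw [LinearMap.finrank_range_of_inj hφ, hL, finrank_fintype_fun_eq_card, Fintype.card_fin]
  let e := OnePoint.equivProjectivization F
  rw [← hrange, projPts_range hφ, ← Set.image_preimage_eq_inter_range,
    Set.ncard_image_of_injective _ (Projectivization.map_injective φ hφ),
    ← Set.ncard_preimage_of_injective_subset_range e.injective (by simp)]
  classical
  rw [ncard_onePoint]
  simp [e, Projectivization.map_mk, mk_mem_hypersurfacePts hf, φ,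
    Fintype.linearCombination_apply, add_comm]

theorem ncard_line_eq_one_or_eq_card_add_one (hfv : eval v f = 0)
    (h : ∀ l : F, eval (w + l • v) f = 0 ↔ eval w f = 0) :
    (hypersurfacePts f ∩ projPts L).ncard = 1 ∨
      (hypersurfacePts f ∩ projPts L).ncard = Fintype.card F + 1 := by
  classical
  rw [ncard_line hf hL hv hw hv₀ hwv, if_pos hfv]
  by_cases hfw : eval w f = 0 <;> simp [h, hfw]

end Line

end ProjectiveCount

/-- `W` is a solid meeting the zero set `Z` of the form `f` of degree `q + 1` in as many vectors as
a plane has, and `Z` contains one in `q` of the vectors outside `W` and no solid. This is what the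
cardinalities of `S` and `S ∩ Σ₃` mean for the underlying vector spaces. -/
structure IsSpecialSolid {K σ : Type*} [Field K] (q : ℕ) (f : MvPolynomial σ K)
    (W : Submodule K (σ → K)) : Prop where
  isHomogeneous : f.IsHomogeneous (q + 1)
  ne_top : W ≠ ⊤
  finrank_eq : finrank K W = 4
  ncard_zeros : {x ∈ W | eval x f = 0}.ncard = q ^ 6
  ncard_compl : {x | x ∉ W}.ncard = q * {x | x ∉ W ∧ eval x f = 0}.ncard
  exists_eval_ne_zero : ∀ U : Submodule K (σ → K), finrank K U = 4 → ∃ x ∈ U, eval x f ≠ 0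

theorem inf_ne_bot_of_finrank_lt {K V : Type*} [Field K] [AddCommGroup V] [Module K V]
    {A B U : Submodule K V} [FiniteDimensional K U] (hA : A ≤ U) (hB : B ≤ U)
    (h : finrank K U < finrank K A + finrank K B) : A ⊓ B ≠ ⊥ := by
  intro hbot
  have := Submodule.finiteDimensional_of_le hA
  have := Submodule.finiteDimensional_of_le hB
  have hsum := Submodule.finrank_sup_add_finrank_inf_eq A B
  have hle := Submodule.finrank_mono (sup_le hA hB)
  rw [hbot, finrank_bot] at hsum
  omega

namespace IsSpecialSolid

variable {K σ : Type*} [Field K] {q : ℕ} {f : MvPolynomial σ K} {W : Submodule K (σ → K)}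
  (hW : IsSpecialSolid q f W)
include hW

theorem card_compl [DecidableEq K] [Fintype (σ → K)] [DecidablePred (· ∈ W)] :
    #{x | x ∉ W} = q * #{x ∈ {x | x ∉ W} | eval x f = 0} := by
  simpa [Finset.filter_filter, ← Set.ncard_coe_finset] using hW.ncard_compl

section Plane

variable [Finite σ] [Fintype K] (hq : 2 < q) (hK : Fintype.card K = q ^ 2)
include hq hK

-- Otherwise every plane `w + ⟨u, v⟩` outside `W` has fewer than `q ^ 3` zeros, which is the average
-- by `ncard_compl`.
theorem exists_eval_pair_eq_zero {u v : σ → K} (hu : u ∈ W) (hv : v ∈ W) :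
    ∃ a b : K, (a, b) ≠ 0 ∧ eval (a • u + b • v) f = 0 := by
  classical
  have := Fintype.ofFinite σ
  by_contra! hnone
  obtain ⟨w, hw⟩ := SetLike.exists_not_mem_of_ne_top W hW.ne_top
  have hplane (w : σ → K) : #{x : K × K | eval (w + (x.1 • u + x.2 • v)) f = 0} < q ^ 3 :=
    card_plane_zeros_lt hq hK hW.isHomogeneous (fun x hx ↦ hnone x.1 x.2 hx) w
  have hsum := sum_card_translates (O := {x | x ∉ W}) (g := fun x : K × K ↦ x.1 • u + x.2 • v)
    (fun x w ↦ by simp [W.add_mem_iff_left (W.add_mem (W.smul_mem x.1 hu) (W.smul_mem x.2 hv))])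
    (fun x ↦ eval x f = 0)
  have hlt := Finset.sum_lt_sum_of_nonempty (s := {x | x ∉ W}) ⟨w, by simpa using hw⟩
    fun w _ ↦ hplane w
  rw [hsum, Finset.sum_const, hW.card_compl, Fintype.card_prod, hK, smul_eq_mul] at hlt
  exact hlt.ne (by ring)

theorem exists_plane : ∃ π ≤ W, finrank K π = 3 ∧ ∀ x ∈ W, eval x f = 0 ↔ x ∈ π := by
  have hZ : {x : W | eval (x : σ → K) f = 0}.ncard = q ^ 6 := by
    rw [← hW.ncard_zeros, ← Set.ncard_image_of_injective _ W.subtype_injective]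
    congr 1
    ext x
    simp [and_comm]
  have hcardW : Nat.card W = Nat.card K * {x : W | eval (x : σ → K) f = 0}.ncard := by
    rw [hZ, Module.natCard_eq_pow_finrank (K := K), hW.finrank_eq, Nat.card_eq_fintype_card, hK]
    ring
  obtain ⟨π, hπ⟩ := exists_submodule_of_forall_pair (Z := {x : W | eval (x : σ → K) f = 0})
    (fun c x hx ↦ by simpa [eval_smul_of_isHomogeneous hW.isHomogeneous] using Or.inr hx)
    (fun u v ↦ hW.exists_eval_pair_eq_zero hq hK u.2 v.2) hcardW
  have hrank : finrank K π = 3 := by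
    have hcard : q ^ (2 * finrank K π) = q ^ 6 := by
      rw [← hZ, ← hπ, pow_mul, ← hK, ← Nat.card_eq_fintype_card]
      exact (Module.natCard_eq_pow_finrank (K := K) (V := π)).symm
    have := Nat.pow_right_injective (by omega : 2 ≤ q) hcard
    omega
  have hmem (x : W) : x ∈ π ↔ eval (x : σ → K) f = 0 := by
    rw [← SetLike.mem_coe, hπ, Set.mem_ofPred_eq]
  refine ⟨π.map W.subtype, W.map_subtype_le π, ?_, fun x hx ↦ ?_⟩
  · rw [Submodule.finrank_map_subtype_eq, hrank]
  · simp [hmem, hx]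

theorem exists_linearMap_range :
    ∃ φ : (Fin 3 → K) →ₗ[K] (σ → K), Function.Injective φ ∧ LinearMap.range φ ≤ W ∧
      ∀ x ∈ W, eval x f = 0 ↔ x ∈ LinearMap.range φ := by
  obtain ⟨π, hπW, hrank, hmem⟩ := hW.exists_plane hq hK
  let b := (finBasisOfFinrankEq K π hrank).equivFun.symm
  have hrange : LinearMap.range (π.subtype ∘ₗ (b : (Fin 3 → K) →ₗ[K] π)) = π := by
    rw [LinearMap.range_comp_of_range_eq_top _ b.range, π.range_subtype]
  exact ⟨π.subtype ∘ₗ b, π.subtype_injective.comp b.injective, by rwa [hrange], by rwa [hrange]⟩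

end Plane

section Translates

variable [Finite σ] {φ : (Fin 3 → K) →ₗ[K] (σ → K)} (hφ : Function.Injective φ)
  (hle : LinearMap.range φ ≤ W) (hmem : ∀ x ∈ W, eval x f = 0 ↔ x ∈ LinearMap.range φ)
include hφ hle hmem

theorem restrictAffine_ne_zero {w : σ → K} (hw : w ∉ W) : restrictAffine φ w f ≠ 0 := by
  intro hzero
  have hrank : finrank K ↥(LinearMap.range φ ⊔ K ∙ w) = 4 := by
    rw [Submodule.finrank_sup_span_singleton fun h ↦ hw (hle h),
      LinearMap.finrank_range_of_inj hφ, finrank_fintype_fun_eq_card, Fintype.card_fin]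
  obtain ⟨x, hx, hne⟩ := hW.exists_eval_ne_zero _ hrank
  obtain ⟨-, ⟨y, rfl⟩, cw, hcw, rfl⟩ := Submodule.mem_sup.1 hx
  obtain ⟨c, rfl⟩ := Submodule.mem_span_singleton.1 hcw
  refine hne ?_
  by_cases hc : c = 0
  · simpa [hc] using (hmem _ (hle ⟨y, rfl⟩)).2 ⟨y, rfl⟩
  · have hpt : φ y + c • w = c • (w + φ (c⁻¹ • y)) := by
      rw [map_smul, smul_add, smul_inv_smul₀ hc, add_comm]
    rw [hpt, eval_smul_eq_zero_iff hW.isHomogeneous hc, ← eval_restrictAffine, hzero, map_zero]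

variable [Fintype K] [DecidableEq K] (hq : 2 < q) (hK : Fintype.card K = q ^ 2)
include hq hK

-- The bound holds on each translate of the plane of zeros, and `ncard_compl` says that the average
-- over all translates outside `W` equals it.
theorem attainsSchwartzZippel {w : σ → K} (hw : w ∉ W) :
    AttainsSchwartzZippel q (restrictAffine φ w f) := by
  classical
  have := Fintype.ofFinite σ
  have hdeg (w : σ → K) : (restrictAffine φ w f).totalDegree ≤ q :=
    totalDegree_restrictAffine_le_of_eval_range_eq_zero hW.isHomogeneous (by nlinarith)
      fun y ↦ (hmem _ (hle ⟨y, rfl⟩)).2 ⟨y, rfl⟩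
  refine ⟨hdeg w, ?_⟩
  simp only [eval_restrictAffine]
  refine card_translates_eq_of_le (O := {x | x ∉ W}) (g := φ)
    (fun y w ↦ by simp [W.add_mem_iff_left (hle ⟨y, rfl⟩)]) (fun x ↦ eval x f = 0)
    (fun w hw ↦ ?_) ?_ (by simpa using hw)
  · simpa using card_zeros_le_of_totalDegree_le
      (hW.restrictAffine_ne_zero hφ hle hmem (by simpa using hw)) (hdeg w)
  · rw [hW.card_compl, Fintype.card_pi]
    simp only [hK, Finset.prod_const, Finset.card_univ, Fintype.card_fin]
    ring

theorem card_zeros_transversal_eq_one_or_eq_add_one {v w : σ → K} (hv : v ∈ W) (hv₀ : eval v f ≠ 0)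
    (hw : w ∉ W) :
    #{l : K | eval (w + l • v) f = 0} = 1 ∨ #{l : K | eval (w + l • v) f = 0} = q + 1 := by
  have hG (s : K) : AttainsSchwartzZippel q (restrictAffine φ (w + s • v) f) :=
    hW.attainsSchwartzZippel hφ hle hmem hq hK fun h ↦
      hw ((W.add_mem_iff_left (W.smul_mem s hv)).1 h)
  obtain ⟨P, hP⟩ := exists_forall_leading_ne_zero le_rfl (by omega) (by nlinarith) hG
  refine card_zeros_line_eq_one_or_eq_add_one (p := φ P) hK hW.isHomogeneous
    (fun s ↦ ?_) hq fun m hm ↦ hv₀ ?_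
  · simpa using (hG s).card_zeros_line (hP s) 0
  · have hφP : m • φ P ∈ LinearMap.range φ := Submodule.smul_mem _ m ⟨P, rfl⟩
    rw [hmem v hv]
    rwa [hmem _ (W.add_mem hv (hle hφP)), Submodule.add_mem_iff_left _ hφP] at hm

end Translates

end IsSpecialSolid

section Lines

namespace IsSpecialSolid

variable {F : Type} [Field F] [Fintype F] {n q : ℕ} {f : MvPolynomial (Fin n) F}
  {W L : Submodule F (Fin n → F)} (hW : IsSpecialSolid q f W) (hq : 2 < q)
  (hK : Fintype.card F = q ^ 2) (hL : finrank F L = 2)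
include hW hq hK hL

theorem ncard_line_of_le (hLW : L ≤ W) :
    (hypersurfacePts f ∩ projPts L).ncard = 1 ∨
      (hypersurfacePts f ∩ projPts L).ncard = q ^ 2 + 1 := by
  classical
  obtain ⟨π, hπW, hπ, hmem⟩ := hW.exists_plane hq hK
  obtain ⟨v, ⟨hvL, hvπ⟩, hv₀⟩ := Submodule.exists_mem_ne_zero_of_ne_bot <|
    inf_ne_bot_of_finrank_lt hLW hπW (by rw [hL, hπ, hW.finrank_eq]; norm_num)
  obtain ⟨w, hwL, hwv⟩ : ∃ w ∈ L, w ∉ F ∙ v := by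
    rw [← SetLike.not_le_iff_exists]
    intro hle
    have := Submodule.finrank_mono hle
    rw [hL, finrank_span_singleton hv₀] at this
    omega
  rw [← hK]
  refine ncard_line_eq_one_or_eq_card_add_one hW.isHomogeneous hL hvL hwL hv₀ hwv
    ((hmem v (hLW hvL)).2 hvπ) fun l ↦ ?_
  rw [hmem _ (hLW (L.add_mem hwL (L.smul_mem l hvL))), hmem w (hLW hwL),
    π.add_mem_iff_left (π.smul_mem l hvπ)]

theorem ncard_line_of_not_le (hLW : ¬ L ≤ W) {v : Fin n → F} (hvL : v ∈ L) (hvW : v ∈ W)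
    (hv₀ : v ≠ 0) :
    (hypersurfacePts f ∩ projPts L).ncard = 1 ∨ (hypersurfacePts f ∩ projPts L).ncard = q + 1 ∨
      (hypersurfacePts f ∩ projPts L).ncard = q ^ 2 + 1 := by
  classical
  obtain ⟨w, hwL, hwW⟩ := SetLike.not_le_iff_exists.1 hLW
  have hwv : w ∉ F ∙ v := fun h ↦ hwW ((Submodule.span_singleton_le_iff_mem v W).2 hvW h)
  obtain ⟨φ, hφ, hle, hmem⟩ := hW.exists_linearMap_range hq hK
  by_cases hfv : eval v f = 0
  · obtain ⟨P, rfl⟩ := (hmem v hvW).1 hfv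
    have hG := hW.attainsSchwartzZippel hφ hle hmem hq hK hwW
    by_cases hP : eval P (homogeneousComponent q (restrictAffine φ w f)) = 0
    · have hiff (l : F) : eval (w + l • φ P) f = 0 ↔ eval w f = 0 := by
        simpa only [eval_restrictAffine, zero_add, map_add, map_smul, map_zero, add_zero] using
          hG.eval_add_smul_eq_zero_iff (by omega) (by nlinarith) hP 0 l
      have := ncard_line_eq_one_or_eq_card_add_one hW.isHomogeneous hL hvL hwL hv₀ hwv hfv hiff
      rw [hK] at this
      tauto
    · have hcount := hG.card_zeros_line hP 0
      simp only [eval_restrictAffine, zero_add, map_smul] at hcount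
      rw [ncard_line hW.isHomogeneous hL hvL hwL hv₀ hwv, hcount, if_pos hfv]
      exact .inr (.inl rfl)
  · rw [ncard_line hW.isHomogeneous hL hvL hwL hv₀ hwv, if_neg hfv, add_zero]
    have := hW.card_zeros_transversal_eq_one_or_eq_add_one hφ hle hmem hq hK hvW hfv hwW
    tauto

theorem ncard_line (hLW : L ⊓ W ≠ ⊥) :
    (hypersurfacePts f ∩ projPts L).ncard = 1 ∨ (hypersurfacePts f ∩ projPts L).ncard = q + 1 ∨
      (hypersurfacePts f ∩ projPts L).ncard = q ^ 2 + 1 := by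
  by_cases hle : L ≤ W
  · have := hW.ncard_line_of_le hq hK hL hle
    tauto
  · obtain ⟨v, ⟨hvL, hvW⟩, hv₀⟩ := Submodule.exists_mem_ne_zero_of_ne_bot hLW
    exact hW.ncard_line_of_not_le hq hK hL hle hvL hvW hv₀

end IsSpecialSolid

end Lines

section SpecialSolid

variable {F : Type} [Field F] [Fintype F] {q k : ℕ} (hF : Fintype.card F = q ^ 2)
  {f : MvPolynomial (Fin (k + 4)) F} (hf : f.IsHomogeneous (q + 1)) (hq : 0 < q)
include hF hf hq

theorem ncard_zeros_of_ncard_eq_plane {W : Submodule F (Fin (k + 4) → F)}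
    (hW : (hypersurfacePts f ∩ projPts W).ncard = q ^ 4 + q ^ 2 + 1) :
    {x ∈ W | eval x f = 0}.ncard = q ^ 6 := by
  rw [ncard_zeros hf q.succ_ne_zero, hW, Nat.card_eq_fintype_card, hF]
  obtain ⟨m, hm⟩ : ∃ m, q ^ 2 = m + 1 := ⟨q ^ 2 - 1, by have := pow_pos hq 2; omega⟩
  rw [show q ^ 4 = (q ^ 2) ^ 2 by ring, show q ^ 6 = (q ^ 2) ^ 3 by ring, hm, Nat.add_sub_cancel]
  ring

theorem ncard_zeros_of_ncard_eq_sum (hcard : (hypersurfacePts f).ncard =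
      ∑ i ∈ Finset.range k, q ^ (2 * i + 7) + q ^ 4 + q ^ 2 + 1) :
    {x | eval x f = 0}.ncard = q ^ 6 + q ^ 7 * (q ^ (2 * k) - 1) := by
  have htop : {x | eval x f = 0} = {x ∈ (⊤ : Submodule F (Fin (k + 4) → F)) | eval x f = 0} := by
    simp
  have hpts : hypersurfacePts f ∩ projPts ⊤ = hypersurfacePts f := by simp [projPts]
  rw [htop, ncard_zeros hf q.succ_ne_zero, hpts, hcard, Nat.card_eq_fintype_card, hF]
  obtain ⟨m, hm⟩ : ∃ m, q ^ 2 = m + 1 := ⟨q ^ 2 - 1, by have := pow_pos hq 2; omega⟩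
  have hgeom := geom_sum_mul_add m k
  have hsum : ∑ i ∈ Finset.range k, q ^ (2 * i + 7) =
      q ^ 7 * ∑ i ∈ Finset.range k, (m + 1) ^ i := by
    rw [Finset.mul_sum]
    exact Finset.sum_congr rfl fun i _ ↦ by rw [← hm]; ring
  rw [hsum, pow_mul, show q ^ 4 = (q ^ 2) ^ 2 by ring, show q ^ 6 = (q ^ 2) ^ 3 by ring, hm,
    ← hgeom, Nat.add_sub_cancel, Nat.add_sub_cancel]
  ring

omit hf hq in
theorem ncard_compl_of_finrank_eq_four {W : Submodule F (Fin (k + 4) → F)} (hW : finrank F W = 4) :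
    {x | x ∉ W}.ncard = q ^ 8 * (q ^ (2 * k) - 1) := by
  have hsplit := Set.ncard_add_ncard_compl (W : Set (Fin (k + 4) → F))
  have hcardW : (W : Set (Fin (k + 4) → F)).ncard = q ^ 8 := by
    rw [← Nat.card_coe_set_eq, SetLike.coe_sort_coe, Module.natCard_eq_pow_finrank (K := F), hW,
      Nat.card_eq_fintype_card, hF]
    ring
  rw [hcardW, Module.natCard_eq_pow_finrank (K := F), finrank_fin_fun,
    Nat.card_eq_fintype_card, hF] at hsplit
  rw [Nat.mul_sub_one, ← pow_add]
  exact Nat.eq_sub_of_add_eq' (hsplit.trans (by ring))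

theorem isSpecialSolid_of_ncard (hk : 0 < k)
    (hsolid : ¬ ∃ U : Submodule F (Fin (k + 4) → F), finrank F U = 4 ∧
      projPts U ⊆ hypersurfacePts f)
    (hcard : (hypersurfacePts f).ncard =
      ∑ i ∈ Finset.range k, q ^ (2 * i + 7) + q ^ 4 + q ^ 2 + 1)
    {W : Submodule F (Fin (k + 4) → F)} (hW : finrank F W = 4)
    (hint : (hypersurfacePts f ∩ projPts W).ncard = q ^ 4 + q ^ 2 + 1) :
    IsSpecialSolid q f W where
  isHomogeneous := hf
  ne_top := by
    rintro rfl
    rw [finrank_top, finrank_fin_fun] at hW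
    omega
  finrank_eq := hW
  ncard_zeros := ncard_zeros_of_ncard_eq_plane hF hf hq hint
  ncard_compl := by
    have hzeros : q ^ 6 + {x | x ∉ W ∧ eval x f = 0}.ncard = {x | eval x f = 0}.ncard := by
      rw [← ncard_zeros_of_ncard_eq_plane hF hf hq hint]
      convert Set.ncard_inter_add_ncard_sdiff_eq_ncard {x | eval x f = 0} (W : Set _) using 3
      · exact Set.inter_comm _ _
      · exact Set.inter_comm _ _
    rw [ncard_zeros_of_ncard_eq_sum hF hf hq hcard, Nat.add_left_cancel_iff] at hzeros
    have hdvd : q ^ 8 * (q ^ (2 * k) - 1) = q * (q ^ 7 * (q ^ (2 * k) - 1)) := by ring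
    rw [hzeros, ← hdvd, ncard_compl_of_finrank_eq_four hF hW]
  exists_eval_ne_zero U hU := by
    by_contra! hzero
    refine hsolid ⟨U, hU, fun P hP ↦ hzero _ ?_⟩
    rwa [projPts, Set.mem_ofPred_eq, Projectivization.submodule_eq,
      Submodule.span_singleton_le_iff_mem] at hP

end SpecialSolid

theorem stmt_11_general {F : Type} [Field F] [Fintype F] {q k : ℕ} (hq : 2 < q) (hk : 0 < k)
    (hF : Fintype.card F = q ^ 2) {f : MvPolynomial (Fin (k + 4)) F}
    (hf : f.IsHomogeneous (q + 1))
    (hsolid : ¬ ∃ U : Submodule F (Fin (k + 4) → F), finrank F U = 4 ∧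
      projPts U ⊆ hypersurfacePts f)
    (hcard : (hypersurfacePts f).ncard =
      ∑ i ∈ Finset.range k, q ^ (2 * i + 7) + q ^ 4 + q ^ 2 + 1)
    {W₃ : Submodule F (Fin (k + 4) → F)} (hW₃ : finrank F W₃ = 4)
    (hint : (hypersurfacePts f ∩ projPts W₃).ncard = q ^ 4 + q ^ 2 + 1)
    {L : Submodule F (Fin (k + 4) → F)} (hL : finrank F L = 2) (hLW₃ : L ⊓ W₃ ≠ ⊥) :
    (hypersurfacePts f ∩ projPts L).ncard = 1 ∨ (hypersurfacePts f ∩ projPts L).ncard = q + 1 ∨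
      (hypersurfacePts f ∩ projPts L).ncard = q ^ 2 + 1 :=
  (isSpecialSolid_of_ncard hF hf (by omega) hk hsolid hcard hW₃ hint).ncard_line hq hF hL hLW₃

/-- Under the hypotheses of the main theorem, if `Σ₄` is a `4`-space through the special
solid `Σ₃` and `C := S ∩ Σ₄`, then every line of `Σ₄` meets `C` in exactly `1`, `q+1` or
`q²+1` rational points. -/
theorem stmt_11 (q : ℕ) (hq : ∃ p k : ℕ, p.Prime ∧ 0 < k ∧ q = p ^ k) (hq2 : 2 < q)
    (F : Type) [Field F] [Fintype F] (hcardF : Fintype.card F = q ^ 2)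
    (f : MvPolynomial (Fin 7) F) (hf0 : f ≠ 0) (hfdeg : f.IsHomogeneous (q + 1))
    (S : Set (Projectivization F (Fin 7 → F))) (hS : S = hypersurfacePts f)
    (hnosolid : ¬ ∃ W : Submodule F (Fin 7 → F), Module.finrank F W = 4 ∧ projPts W ⊆ S)
    (hcardS : S.ncard = q ^ 11 + q ^ 9 + q ^ 7 + q ^ 4 + q ^ 2 + 1)
    (W₃ : Submodule F (Fin 7 → F)) (hW₃ : Module.finrank F W₃ = 4)
    (hint : (S ∩ projPts W₃).ncard = q ^ 4 + q ^ 2 + 1)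
    (W₄ : Submodule F (Fin 7 → F)) (hW₄ : Module.finrank F W₄ = 5) (hle : W₃ ≤ W₄)
    (C : Set (Projectivization F (Fin 7 → F))) (hC : C = S ∩ projPts W₄) :
    ∀ L : Submodule F (Fin 7 → F), Module.finrank F L = 2 → L ≤ W₄ →
      (C ∩ projPts L).ncard = 1 ∨ (C ∩ projPts L).ncard = q + 1 ∨
        (C ∩ projPts L).ncard = q ^ 2 + 1 := by
  subst hS hC
  intro L hL hLW₄
  have hLW₃ : L ⊓ W₃ ≠ ⊥ := inf_ne_bot_of_finrank_lt hLW₄ hle (by omega)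
  have hsub : projPts L ⊆ projPts W₄ := fun P (hP : P.submodule ≤ L) ↦ hP.trans hLW₄
  have hCL : hypersurfacePts f ∩ projPts W₄ ∩ projPts L = hypersurfacePts f ∩ projPts L := by
    rw [Set.inter_assoc, Set.inter_eq_right.2 hsub]
  have hsum : (hypersurfacePts f).ncard =
      ∑ i ∈ Finset.range 3, q ^ (2 * i + 7) + q ^ 4 + q ^ 2 + 1 := by
    rw [hcardS]
    simp only [Finset.sum_range_succ, Finset.sum_range_zero]
    ring
  rw [hCL]
  exact stmt_11_general hq2 three_pos hcardF hfdeg hnosolid hsum hW₃ hint hL hLW₃
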